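/- arXiv:1611.10099 — 9 statements merged into one kernel-verified Lean document; each statement's English description precedes it below -/
import Mathlib

section
/- Let ε₁, ε₂, ε₃ be nonnegative real numbers and let H : D → ℝ satisfy: (i) |H(x,y,z) − H(σ(x),σ(y),σ(z))| ≤ ε₁ for all (x,y,z) ∈ D and every permutation σ of the three coordinates; (ii) |H(x,y,z) − H(x+y,0,z) − H(x,y,0)| ≤ ε₂ for all (x,y,z) ∈ D°; (iii) |H(tx,ty,0) − t·H(x,y,0)| ≤ ε₃ for all t,x,y > 0 (approximate positive homogeneity of degree α = 1). Then there exists a function φ : ℝ₊₊ → ℝ satisfying φ(xy) = x·φ(y) + y·φ(x) for all x,y > 0 such that |H(x,y,z) − [φ(x+y+z) − φ(x) − φ(y) − φ(z)]| ≤ ε₁ + ε₂ for all (x,y,z) ∈ D°. -/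
/-!
Approximate homogeneity of degree one is self-improving: evaluating a bounded error at `s • p`,
dividing by `s` and letting `s → ∞` shows that `c(x, y) = H(x, y, 0)` is exactly homogeneous,
symmetric and satisfies the cocycle identity `c(x, y) + c(x + y, z) = c(y, z) + c(x, y + z)` on
positive arguments, while `H(x, y, z)` stays within `ε₁ + ε₂` of `c(x, y) + c(x + y, z)`.

It remains to write `c(x, y) = φ(x + y) - φ(x) - φ(y)` with `φ` a derivation for multiplication.
Once `c` is extended to all real arguments, twisting the addition of `ℝ × ℝ` by `c` gives
a commutative ring, by homogeneity, and hence a square-zero extension of `ℝ`. A field of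
characteristic zero is formally smooth over `ℤ`, so the extension has a ring section
`x ↦ (x, φ(x))`; its multiplicativity is the Leibniz rule and its additivity is the formula for `c`.
-/

theorem formallySmooth_int_of_charZero (K : Type*) [Field K] [CharZero K] :
    Algebra.FormallySmooth ℤ K := by
  obtain ⟨s, hs⟩ := exists_isTranscendenceBasis ℚ K
  have := hs.isAlgebraic_field
  have : Algebra.FormallySmooth ℚ K := .of_algebraicIndependent_of_isSeparable hs.1
  have : Algebra.FormallySmooth ℤ ℚ := .of_isLocalization (nonZeroDivisors ℤ)
  exact .comp ℤ ℚ K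

section Nonneg

open Nonneg

theorem toNonneg_add_toNonneg_add_toNonneg_neg {G : Type*} [AddCommGroup G] [LinearOrder G]
    [IsOrderedAddMonoid G] (x y : G) :
    toNonneg x + toNonneg y + toNonneg (-(x + y)) =
      toNonneg (-x) + toNonneg (-y) + toNonneg (x + y) := by
  apply Subtype.ext
  simp only [Nonneg.coe_add, coe_toNonneg]
  linear_combination (norm := module) max_zero_sub_max_neg_zero_eq_self x +
    max_zero_sub_max_neg_zero_eq_self y - max_zero_sub_max_neg_zero_eq_self (x + y)

theorem toNonneg_coe_mul {R : Type*} [Semiring R] [LinearOrder R] [IsOrderedRing R]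
    (t : {t : R // 0 ≤ t}) (x : R) : toNonneg (t * x) = t * toNonneg x :=
  Subtype.ext <| by simp [mul_max_of_nonneg _ _ t.2]

end Nonneg

/-- A symmetric 2-cocycle on the additive monoid of `R` with values in an `R`-module, homogeneous
of degree one. Normalization `c 0 x = 0` follows from homogeneity. -/
structure HomogeneousCocycle (R M : Type*) [CommSemiring R] [AddCommGroup M] [Module R M] where
  toFun : R → R → M
  symm : ∀ x y, toFun x y = toFun y x
  assoc : ∀ x y z, toFun x y + toFun (x + y) z = toFun y z + toFun x (y + z)
  map_mul_mul : ∀ t x y, toFun (t * x) (t * y) = t • toFun x y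

namespace HomogeneousCocycle

section Semiring

variable {R M : Type*} [CommSemiring R] [AddCommGroup M] [Module R M]

instance : CoeFun (HomogeneousCocycle R M) fun _ ↦ R → R → M := ⟨toFun⟩

variable (c : HomogeneousCocycle R M)

@[simp]
theorem map_zero_left (x : R) : c 0 x = 0 := by
  have map_zero_zero : c 0 0 = 0 := by simpa using c.map_mul_mul 0 0 0
  simpa [map_zero_zero] using c.assoc 0 0 x

@[simp]
theorem map_zero_right (x : R) : c x 0 = 0 := by
  rw [c.symm, map_zero_left]

/-- The iterated cocycle: the module component of `(x, 0) + (y, 0) + (z, 0)` in `c.Extension`. -/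
def triple (x y z : R) : M := c x y + c (x + y) z

theorem triple_mul (t x y z : R) : c.triple (t * x) (t * y) (t * z) = t • c.triple x y z := by
  simp only [triple, ← mul_add, c.map_mul_mul, smul_add]

/-- The square-zero extension of `R` by `M` attached to a homogeneous cocycle `c`: pairs with
`(x, m) + (y, n) = (x + y, m + n + c x y)` and `(x, m) * (y, n) = (x * y, x • n + y • m)`. -/
@[ext]
structure Extension (c : HomogeneousCocycle R M) where
  fst : R
  snd : M

namespace Extension

variable {c}

instance : Zero c.Extension := ⟨⟨0, 0⟩⟩

instance : One c.Extension := ⟨⟨1, 0⟩⟩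

instance : Add c.Extension := ⟨fun a b ↦ ⟨a.fst + b.fst, a.snd + b.snd + c a.fst b.fst⟩⟩

instance : Mul c.Extension := ⟨fun a b ↦ ⟨a.fst * b.fst, a.fst • b.snd + b.fst • a.snd⟩⟩

@[simp] theorem fst_zero : (0 : c.Extension).fst = 0 := rfl

@[simp] theorem snd_zero : (0 : c.Extension).snd = 0 := rfl

@[simp] theorem fst_one : (1 : c.Extension).fst = 1 := rfl

@[simp] theorem snd_one : (1 : c.Extension).snd = 0 := rfl

@[simp] theorem fst_add (a b : c.Extension) : (a + b).fst = a.fst + b.fst := rfl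

@[simp]
theorem snd_add (a b : c.Extension) : (a + b).snd = a.snd + b.snd + c a.fst b.fst := rfl

@[simp] theorem fst_mul (a b : c.Extension) : (a * b).fst = a.fst * b.fst := rfl

@[simp]
theorem snd_mul (a b : c.Extension) : (a * b).snd = a.fst • b.snd + b.fst • a.snd := rfl

protected theorem add_assoc (a b d : c.Extension) : a + b + d = a + (b + d) := by
  ext
  · simp only [fst_add, add_assoc]
  · simp only [snd_add, fst_add]
    linear_combination (norm := module) c.assoc a.fst b.fst d.fst

protected theorem add_comm (a b : c.Extension) : a + b = b + a := by
  ext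
  · simp only [fst_add, add_comm]
  · simp only [snd_add, c.symm a.fst, add_comm a.snd]

protected theorem mul_comm (a b : c.Extension) : a * b = b * a := by
  ext
  · simp only [fst_mul, mul_comm]
  · simp only [snd_mul, add_comm]

protected theorem mul_assoc (a b d : c.Extension) : a * b * d = a * (b * d) := by
  ext
  · simp only [fst_mul, mul_assoc]
  · simp only [snd_mul, fst_mul]
    module

protected theorem mul_add (a b d : c.Extension) : a * (b + d) = a * b + a * d := by
  ext
  · simp only [fst_mul, fst_add, mul_add]
  · simp only [snd_mul, snd_add, fst_mul, fst_add, c.map_mul_mul]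
    module

instance : CommSemiring c.Extension where
  add_assoc := Extension.add_assoc
  add_comm := Extension.add_comm
  zero_add a := by ext <;> simp
  add_zero a := by ext <;> simp
  nsmul := nsmulRec
  mul_assoc := Extension.mul_assoc
  mul_comm := Extension.mul_comm
  one_mul a := by ext <;> simp
  mul_one a := by ext <;> simp
  zero_mul a := by ext <;> simp
  mul_zero a := by ext <;> simp
  left_distrib := Extension.mul_add
  right_distrib a b d := by
    simp only [Extension.mul_comm _ d, Extension.mul_add]

instance [IsCancelAdd R] : IsCancelAdd c.Extension :=
  have : IsLeftCancelAdd c.Extension := ⟨fun a b d (h : a + b = a + d) ↦ by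
    have hfst : b.fst = d.fst := add_left_cancel (congrArg fst h)
    have hsnd : a.snd + b.snd + c a.fst b.fst = a.snd + d.snd + c a.fst d.fst := congrArg snd h
    rw [hfst] at hsnd
    exact Extension.ext hfst (add_left_cancel (add_right_cancel hsnd))⟩
  AddCommMagma.IsLeftCancelAdd.toIsCancelAdd _

/-- The projection of the extension onto its base. -/
@[simps]
def proj (c : HomogeneousCocycle R M) : c.Extension →+* R where
  toFun := fst
  map_zero' := rfl
  map_one' := rfl
  map_add' _ _ := rfl
  map_mul' _ _ := rfl

theorem proj_surjective : Function.Surjective (proj c) := fun x ↦ ⟨⟨x, 0⟩, rfl⟩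

end Extension

end Semiring

section Ring

variable {R M : Type*} [CommRing R] [AddCommGroup M] [Module R M] (c : HomogeneousCocycle R M)

namespace Extension

variable {c}

instance : Neg c.Extension := ⟨fun a ↦ ⟨-a.fst, -a.snd - c (-a.fst) a.fst⟩⟩

instance : CommRing c.Extension where
  zsmul := zsmulRec
  neg_add_cancel a := by
    ext
    · exact neg_add_cancel a.fst
    · change -a.snd - c (-a.fst) a.fst + a.snd + c (-a.fst) a.fst = 0
      abel

theorem ker_proj_isNilpotent : IsNilpotent (RingHom.ker (proj c)) := by
  refine ⟨2, ?_⟩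
  rw [pow_two, Ideal.zero_eq_bot, eq_bot_iff, Ideal.mul_le]
  intro a ha b hb
  rw [RingHom.mem_ker, proj_apply] at ha hb
  rw [Ideal.mem_bot]
  ext <;> simp [ha, hb]

end Extension

theorem exists_leibniz_potential [Algebra.FormallySmooth ℤ R] :
    ∃ φ : R → M, (∀ x y, φ (x * y) = x • φ y + y • φ x) ∧
      ∀ x y, φ (x + y) = φ x + φ y + c x y := by
  let π : c.Extension →ₐ[ℤ] R := (Extension.proj c).toIntAlgHom
  have hker : IsNilpotent (RingHom.ker (π : c.Extension →+* R)) := Extension.ker_proj_isNilpotent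
  let s : R →ₐ[ℤ] c.Extension :=
    Algebra.FormallySmooth.liftOfSurjective (AlgHom.id ℤ R) π Extension.proj_surjective hker
  have hs (x : R) : (s x).fst = x :=
    Algebra.FormallySmooth.liftOfSurjective_apply (AlgHom.id ℤ R) π Extension.proj_surjective hker x
  refine ⟨fun x ↦ (s x).snd, fun x y ↦ ?_, fun x y ↦ ?_⟩
  · simp only [map_mul, Extension.snd_mul, hs]
  · simp only [map_add, Extension.snd_add, hs]

end Ring

section Extend

open Nonneg

variable {R M : Type*} [CommRing R] [LinearOrder R] [IsOrderedRing R] [AddCommGroup M]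
  [Module R M] (c : HomogeneousCocycle {x : R // 0 ≤ x} M)

/-- The values on `R` of the extension of a cocycle on the nonnegative cone: the cocycle measuring
the failure of additivity of the odd section `x ↦ (x⁺, 0) - (x⁻, 0)`. -/
def extendFun (x y : R) : M :=
  c.triple (toNonneg x) (toNonneg y) (toNonneg (-(x + y))) -
    c.triple (toNonneg (-x)) (toNonneg (-y)) (toNonneg (x + y))

theorem extendFun_comm (x y : R) : c.extendFun x y = c.extendFun y x := by
  simp only [extendFun, triple, c.symm (toNonneg x), c.symm (toNonneg (-x)), add_comm x,
    add_comm (toNonneg x), add_comm (toNonneg (-x))]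

theorem extendFun_neg_neg (x y : R) : c.extendFun (-x) (-y) = -c.extendFun x y := by
  simp only [extendFun, ← neg_add, neg_neg, neg_sub]

theorem extendFun_mul_mul (t x y : R) : c.extendFun (t * x) (t * y) = t • c.extendFun x y := by
  have of_nonneg (t : {t : R // 0 ≤ t}) :
      c.extendFun (t * x) (t * y) = t • c.extendFun x y := by
    simp only [extendFun, ← mul_add, ← mul_neg, toNonneg_coe_mul, triple_mul, smul_sub]
  rcases le_total 0 t with ht | ht
  · exact of_nonneg ⟨t, ht⟩
  · have key := of_nonneg ⟨-t, neg_nonneg.2 ht⟩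
    simp only [neg_mul, extendFun_neg_neg, Nonneg.mk_smul, neg_smul] at key
    exact neg_injective key

theorem sum_toNonneg_eq_sum_toNonneg_neg_add_extendFun (x y : R) :
    (⟨toNonneg x, 0⟩ + ⟨toNonneg y, 0⟩ + ⟨toNonneg (-(x + y)), 0⟩ : c.Extension) =
      ⟨toNonneg (-x), 0⟩ + ⟨toNonneg (-y), 0⟩ + ⟨toNonneg (x + y), 0⟩ +
        ⟨0, c.extendFun x y⟩ := by
  ext1
  · simpa only [Extension.fst_add, add_zero] using
      toNonneg_add_toNonneg_add_toNonneg_neg x y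
  · simp [extendFun, triple]

theorem extendFun_assoc (x y z : R) :
    c.extendFun x y + c.extendFun (x + y) z = c.extendFun y z + c.extendFun x (y + z) := by
  have hxy := c.sum_toNonneg_eq_sum_toNonneg_neg_add_extendFun x y
  have hxy_z := c.sum_toNonneg_eq_sum_toNonneg_neg_add_extendFun (x + y) z
  have hyz := c.sum_toNonneg_eq_sum_toNonneg_neg_add_extendFun y z
  have hx_yz := c.sum_toNonneg_eq_sum_toNonneg_neg_add_extendFun x (y + z)
  rw [← add_assoc] at hx_yz
  have key : (⟨0, c.extendFun x y⟩ + ⟨0, c.extendFun (x + y) z⟩ : c.Extension) =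
      ⟨0, c.extendFun y z⟩ + ⟨0, c.extendFun x (y + z)⟩ := by
    linear_combination hxy.symm + hxy_z.symm + hyz + hx_yz
  simpa using congrArg Extension.snd key

/-- The extension of a homogeneous cocycle from the nonnegative cone to the whole ring. -/
@[simps]
def extend : HomogeneousCocycle R M where
  toFun := c.extendFun
  symm := c.extendFun_comm
  assoc := c.extendFun_assoc
  map_mul_mul := c.extendFun_mul_mul

theorem extend_coe (x y : {x : R // 0 ≤ x}) : c.extend x y = c x y := by
  have toNonneg_neg (x : {x : R // 0 ≤ x}) : toNonneg (-(x : R)) = 0 :=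
    Subtype.ext (max_eq_right (neg_nonpos.2 x.2))
  have toNonneg_neg_add : toNonneg (-(x + y : R)) = 0 := toNonneg_neg (x + y)
  simp [extendFun, triple, toNonneg_neg, toNonneg_neg_add, -neg_add_rev]

end Extend

/-- A homogeneous cocycle on the positive cone, extended by zero to the nonnegative cone. -/
def ofPos {R M : Type*} [CommRing R] [LinearOrder R] [IsStrictOrderedRing R] [AddCommGroup M]
    [Module R M] (f : R → R → M) (symm : ∀ x y, 0 < x → 0 < y → f x y = f y x)
    (assoc : ∀ x y z, 0 < x → 0 < y → 0 < z → f x y + f (x + y) z = f y z + f x (y + z))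
    (map_mul_mul : ∀ t x y, 0 < t → 0 < x → 0 < y → f (t * x) (t * y) = t • f x y) :
    HomogeneousCocycle {x : R // 0 ≤ x} M where
  toFun x y := if x = 0 ∨ y = 0 then 0 else f x y
  symm x y := by
    rcases eq_zero_or_pos x with rfl | hx
    · simp
    rcases eq_zero_or_pos y with rfl | hy
    · simp
    simpa [hx.ne', hy.ne'] using symm x y hx hy
  assoc x y z := by
    rcases eq_zero_or_pos x with rfl | hx
    · simp
    rcases eq_zero_or_pos y with rfl | hy
    · simp
    rcases eq_zero_or_pos z with rfl | hz
    · simp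
    simpa [hx.ne', hy.ne', hz.ne'] using assoc x y z hx hy hz
  map_mul_mul t x y := by
    rcases eq_zero_or_pos t with rfl | ht
    · simp
    rcases eq_zero_or_pos x with rfl | hx
    · simp
    rcases eq_zero_or_pos y with rfl | hy
    · simp
    simpa [ht.ne', hx.ne', hy.ne'] using map_mul_mul t x y ht hx hy

end HomogeneousCocycle

theorem exists_leibniz_potential_of_pos {K M : Type*} [Field K] [LinearOrder K]
    [IsStrictOrderedRing K] [AddCommGroup M] [Module K M] (f : K → K → M)
    (symm : ∀ x y, 0 < x → 0 < y → f x y = f y x)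
    (assoc : ∀ x y z, 0 < x → 0 < y → 0 < z → f x y + f (x + y) z = f y z + f x (y + z))
    (map_mul_mul : ∀ t x y, 0 < t → 0 < x → 0 < y → f (t * x) (t * y) = t • f x y) :
    ∃ φ : K → M, (∀ x y, φ (x * y) = x • φ y + y • φ x) ∧
      ∀ x y, 0 < x → 0 < y → φ (x + y) = φ x + φ y + f x y := by
  have := formallySmooth_int_of_charZero K
  let c := HomogeneousCocycle.ofPos f symm assoc map_mul_mul
  obtain ⟨φ, leibniz, potential⟩ := c.extend.exists_leibniz_potential
  refine ⟨φ, leibniz, fun x y hx hy ↦ ?_⟩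
  have hc : c.extend x y = f x y := by
    rw [c.extend_coe ⟨x, hx.le⟩ ⟨y, hy.le⟩]
    exact if_neg (by simp [hx.ne', hy.ne'])
  rw [potential, hc]

section Superstability

variable {F : Type*} [NormedAddCommGroup F] [NormedSpace ℝ F]

theorem eq_of_forall_pos_dist_smul_le {a b : F} {C : ℝ}
    (h : ∀ t : ℝ, 0 < t → dist (t • a) (t • b) ≤ C) : a = b := by
  by_contra hab
  have hpos : 0 < dist a b := dist_pos.2 hab
  have hC : 0 ≤ C := dist_nonneg.trans (h 1 one_pos)
  have hle := h ((C + 1) / dist a b) (by positivity)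
  rw [dist_smul₀, Real.norm_of_nonneg (by positivity), div_mul_cancel₀ _ hpos.ne'] at hle
  linarith

theorem map_smul_of_forall_pos_norm_sub_le {E : Type*} [MulAction ℝ E] {s : Set E} {f : E → F}
    {ε : ℝ} (smul_mem : ∀ t : ℝ, 0 < t → ∀ x ∈ s, t • x ∈ s)
    (h : ∀ t : ℝ, 0 < t → ∀ x ∈ s, ‖f (t • x) - t • f x‖ ≤ ε) {t : ℝ} (ht : 0 < t) {x : E}
    (hx : x ∈ s) : f (t • x) = t • f x := by
  refine eq_of_forall_pos_dist_smul_le (C := ε + ε) fun r hr ↦ ?_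
  calc dist (r • f (t • x)) (r • t • f x)
      ≤ dist (f (r • t • x)) (r • f (t • x)) + dist (f (r • t • x)) (r • t • f x) :=
        dist_triangle_left _ _ _
    _ ≤ ε + ε := by
        gcongr
        · rw [dist_eq_norm]
          exact h r hr _ (smul_mem t ht x hx)
        · rw [dist_eq_norm, smul_smul, smul_smul]
          exact h (r * t) (mul_pos hr ht) x hx

end Superstability

section Stability

variable {F : Type*} [NormedAddCommGroup F] {ε₁ ε₂ ε₃ : ℝ} {H : ℝ → ℝ → ℝ → F}

/-- Invariance of `H` up to `ε` under permutations of its arguments, on the closed positive octant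
without the origin. -/
def IsApproxSymmetric (ε : ℝ) (H : ℝ → ℝ → ℝ → F) : Prop :=
  ∀ x y z : ℝ, 0 ≤ x → 0 ≤ y → 0 ≤ z → 0 < x + y + z → ∀ σ : Equiv.Perm (Fin 3),
    ‖H x y z - H (![x, y, z] (σ 0)) (![x, y, z] (σ 1)) (![x, y, z] (σ 2))‖ ≤ ε

/-- The entropy equation `H x y z = H (x + y) 0 z + H x y 0` up to `ε`, on the open positive
octant. -/
def IsApproxEntropy (ε : ℝ) (H : ℝ → ℝ → ℝ → F) : Prop :=
  ∀ x y z : ℝ, 0 < x → 0 < y → 0 < z → ‖H x y z - H (x + y) 0 z - H x y 0‖ ≤ ε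

namespace IsApproxSymmetric

variable {x y z : ℝ}

theorem dist_swap_left (hsym : IsApproxSymmetric ε₁ H) (hx : 0 ≤ x) (hy : 0 ≤ y) (hz : 0 ≤ z)
    (h : 0 < x + y + z) : dist (H x y z) (H y x z) ≤ ε₁ := by
  simpa [dist_eq_norm, Equiv.swap_apply_of_ne_of_ne] using hsym x y z hx hy hz h (Equiv.swap 0 1)

theorem dist_swap_right (hsym : IsApproxSymmetric ε₁ H) (hx : 0 ≤ x) (hy : 0 ≤ y) (hz : 0 ≤ z)
    (h : 0 < x + y + z) : dist (H x y z) (H x z y) ≤ ε₁ := by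
  simpa [dist_eq_norm, Equiv.swap_apply_of_ne_of_ne] using hsym x y z hx hy hz h (Equiv.swap 1 2)

theorem dist_rotate (hsym : IsApproxSymmetric ε₁ H) (hx : 0 ≤ x) (hy : 0 ≤ y) (hz : 0 ≤ z)
    (h : 0 < x + y + z) : dist (H x y z) (H y z x) ≤ ε₁ := by
  simpa [dist_eq_norm, finRotate_apply] using hsym x y z hx hy hz h (finRotate 3)

theorem dist_boundary_add_boundary_le (hsym : IsApproxSymmetric ε₁ H) (heq : IsApproxEntropy ε₂ H)
    (hx : 0 < x) (hy : 0 < y) (hz : 0 < z) :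
    dist (H x y z) (H x y 0 + H (x + y) z 0) ≤ ε₁ + ε₂ := by
  have hrec : dist (H x y z) (H x y 0 + H (x + y) 0 z) ≤ ε₂ := by
    rw [dist_eq_norm, add_comm, ← sub_sub]
    exact heq x y z hx hy hz
  have hswap : dist (H x y 0 + H (x + y) 0 z) (H x y 0 + H (x + y) z 0) ≤ ε₁ := by
    rw [dist_add_left]
    exact hsym.dist_swap_right (by positivity) le_rfl hz.le (by positivity)
  linarith [dist_triangle (H x y z) (H x y 0 + H (x + y) 0 z) (H x y 0 + H (x + y) z 0)]

variable [NormedSpace ℝ F]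

theorem boundary_comm (hsym : IsApproxSymmetric ε₁ H)
    (hhom : ∀ t x y : ℝ, 0 < t → 0 < x → 0 < y → H (t * x) (t * y) 0 = t • H x y 0)
    (hx : 0 < x) (hy : 0 < y) : H x y 0 = H y x 0 := by
  refine eq_of_forall_pos_dist_smul_le (C := ε₁) fun t ht ↦ ?_
  rw [← hhom t x y ht hx hy, ← hhom t y x ht hy hx]
  exact hsym.dist_swap_left (by positivity) (by positivity) le_rfl (by positivity)

theorem boundary_assoc (hsym : IsApproxSymmetric ε₁ H) (heq : IsApproxEntropy ε₂ H)
    (hhom : ∀ t x y : ℝ, 0 < t → 0 < x → 0 < y → H (t * x) (t * y) 0 = t • H x y 0)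
    (hx : 0 < x) (hy : 0 < y) (hz : 0 < z) :
    H x y 0 + H (x + y) z 0 = H y z 0 + H x (y + z) 0 := by
  rw [hsym.boundary_comm hhom hx (add_pos hy hz)]
  have smul_eq {x y z : ℝ} (t : ℝ) (ht : 0 < t) (hx : 0 < x) (hy : 0 < y) (hz : 0 < z) :
      t • (H x y 0 + H (x + y) z 0) =
        H (t * x) (t * y) 0 + H (t * x + t * y) (t * z) 0 := by
    rw [smul_add, ← hhom t x y ht hx hy, ← hhom t _ z ht (add_pos hx hy) hz, mul_add]
  refine eq_of_forall_pos_dist_smul_le (C := (ε₁ + ε₂) + ε₁ + (ε₁ + ε₂)) fun t ht ↦ ?_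
  have htx := mul_pos ht hx
  have hty := mul_pos ht hy
  have htz := mul_pos ht hz
  rw [smul_eq t ht hx hy hz, smul_eq t ht hy hz hx]
  refine (dist_triangle4 _ (H (t * x) (t * y) (t * z)) (H (t * y) (t * z) (t * x)) _).trans ?_
  gcongr
  · rw [dist_comm]
    exact hsym.dist_boundary_add_boundary_le heq htx hty htz
  · exact hsym.dist_rotate htx.le hty.le htz.le (by positivity)
  · exact hsym.dist_boundary_add_boundary_le heq hty htz htx

end IsApproxSymmetric

variable [NormedSpace ℝ F]

theorem boundary_mul_mul_of_norm_sub_le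
    (hhom : ∀ t x y : ℝ, 0 < t → 0 < x → 0 < y → ‖H (t * x) (t * y) 0 - t • H x y 0‖ ≤ ε₃)
    (t x y : ℝ) (ht : 0 < t) (hx : 0 < x) (hy : 0 < y) :
    H (t * x) (t * y) 0 = t • H x y 0 :=
  map_smul_of_forall_pos_norm_sub_le (f := fun p : ℝ × ℝ ↦ H p.1 p.2 0)
    (s := {p | 0 < p.1 ∧ 0 < p.2})
    (fun _ ht _ hp ↦ ⟨mul_pos ht hp.1, mul_pos ht hp.2⟩)
    (fun t ht p hp ↦ hhom t p.1 p.2 ht hp.1 hp.2) ht (x := (x, y)) ⟨hx, hy⟩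

theorem entropy_equation_stability_alpha_one_general
    (hsym : IsApproxSymmetric ε₁ H) (heq : IsApproxEntropy ε₂ H)
    (hhom : ∀ t x y : ℝ, 0 < t → 0 < x → 0 < y → ‖H (t * x) (t * y) 0 - t • H x y 0‖ ≤ ε₃) :
    ∃ φ : ℝ → F,
      (∀ x y : ℝ, φ (x * y) = x • φ y + y • φ x) ∧
      (∀ x y z : ℝ, 0 < x → 0 < y → 0 < z →
        ‖H x y z - (φ (x + y + z) - φ x - φ y - φ z)‖ ≤ ε₁ + ε₂) := by
  have hom := boundary_mul_mul_of_norm_sub_le hhom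
  obtain ⟨φ, leibniz, potential⟩ := exists_leibniz_potential_of_pos (fun x y ↦ H x y 0)
    (fun _ _ hx hy ↦ hsym.boundary_comm hom hx hy)
    (fun _ _ _ hx hy hz ↦ hsym.boundary_assoc heq hom hx hy hz) hom
  refine ⟨φ, leibniz, fun x y z hx hy hz ↦ ?_⟩
  have hφ : φ (x + y + z) - φ x - φ y - φ z = H x y 0 + H (x + y) z 0 := by
    rw [potential (x + y) z (add_pos hx hy) hz, potential x y hx hy]
    abel
  rw [hφ, ← dist_eq_norm]
  exact hsym.dist_boundary_add_boundary_le heq hx hy hz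

end Stability

/-- Hyers–Ulam stability of the entropy equation, case α = 1:
if `H` is approximately symmetric on `D`, approximately satisfies the entropy
equation on `D°` and is approximately positively homogeneous of degree 1, then
`H` is close to a solution of the form `φ(x+y+z) − φ(x) − φ(y) − φ(z)` where
`φ(xy) = x·φ(y) + y·φ(x)`. -/
theorem entropy_equation_stability_alpha_one
    (ε₁ ε₂ ε₃ : ℝ) (hε₁ : 0 ≤ ε₁) (hε₂ : 0 ≤ ε₂) (hε₃ : 0 ≤ ε₃)
    (H : ℝ → ℝ → ℝ → ℝ)
    (hsym : ∀ x y z : ℝ, 0 ≤ x → 0 ≤ y → 0 ≤ z → 0 < x + y + z →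
      ∀ σ : Equiv.Perm (Fin 3),
        |H x y z - H (![x, y, z] (σ 0)) (![x, y, z] (σ 1)) (![x, y, z] (σ 2))| ≤ ε₁)
    (heq : ∀ x y z : ℝ, 0 < x → 0 < y → 0 < z →
      |H x y z - H (x + y) 0 z - H x y 0| ≤ ε₂)
    (hhom : ∀ t x y : ℝ, 0 < t → 0 < x → 0 < y →
      |H (t * x) (t * y) 0 - t * H x y 0| ≤ ε₃) :
    ∃ φ : ℝ → ℝ,
      (∀ x y : ℝ, 0 < x → 0 < y → φ (x * y) = x * φ y + y * φ x) ∧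
      (∀ x y z : ℝ, 0 < x → 0 < y → 0 < z →
        |H x y z - (φ (x + y + z) - φ x - φ y - φ z)| ≤ ε₁ + ε₂) := by
  obtain ⟨φ, leibniz, hφ⟩ := entropy_equation_stability_alpha_one_general (H := H) hsym heq hhom
  exact ⟨φ, fun x y _ _ ↦ leibniz x y, hφ⟩
end

section
/- Let ε₁, ε₂, ε₃ be nonnegative real numbers and let H : D → ℝ satisfy: (i) |H(x,y,z) − H(σ(x),σ(y),σ(z))| ≤ ε₁ for all (x,y,z) ∈ D and every permutation σ of the three coordinates; (ii) |H(x,y,z) − H(x+y,0,z) − H(x,y,0)| ≤ ε₂ for all (x,y,z) ∈ D°; (iii) |H(tx,ty,0) − H(x,y,0)| ≤ ε₃ for all t,x,y > 0 (approximate positive homogeneity of degree α = 0). Then there exists a constant a ∈ ℝ such that |H(x,y,z) − a| ≤ 8ε₃ + 25ε₂ + 49ε₁ for all (x,y,z) ∈ D°. -/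
/-!
Put `f x y = H x y 0`. Up to bounded errors `H x y z ≈ f (x + y) z + f x y`, so `H x y z ≈ H z y x`
becomes `f (x + y) z + f x y ≈ f (z + y) x + f z y`. Adding this relation at the triples
`(x, x, 2y)`, `(y, y, x)` and `(x + y, y, x)`, all mixed terms but `f x y` cancel:
`f (2x) (2y) + f x x + f y y ≈ 2 f x y + f (x + y) (x + y)`.
Homogeneity of degree `0` gives `f (2x) (2y) ≈ f x y` and makes `f` nearly equal to `f 1 1` on the
diagonal, hence `f x y ≈ f 1 1` everywhere and `H ≈ 2 f 1 1`.
-/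

namespace EntropyEquation

variable {S E : Type*} [AddCommSemigroup S] [SeminormedAddCommGroup E]
  {G : S → S → S → E} {f : S → S → E} {c : E} {κ ε δ η θ : ℝ}

theorem norm_cocycle_sub_reverse_le
    (hG : ∀ x y z, ‖G x y z - (f (x + y) z + f x y)‖ ≤ κ)
    (hrev : ∀ x y z, ‖G x y z - G z y x‖ ≤ ε) (x y z : S) :
    ‖f (x + y) z + f x y - (f (z + y) x + f z y)‖ ≤ 2 * κ + ε := by
  calc ‖f (x + y) z + f x y - (f (z + y) x + f z y)‖
      = ‖(G x y z - G z y x) + (G z y x - (f (z + y) x + f z y))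
          - (G x y z - (f (x + y) z + f x y))‖ := by congr 1; abel
    _ ≤ ε + κ + κ :=
        norm_sub_le_of_le (norm_add_le_of_le (hrev x y z) (hG z y x)) (hG x y z)
    _ = 2 * κ + ε := by ring

theorem norm_doubling_defect_le
    (hf : ∀ x y z, ‖f (x + y) z + f x y - (f (z + y) x + f z y)‖ ≤ δ) (x y : S) :
    ‖f (x + x) (y + y) + f x x + f y y - (f x y + f x y + f (x + y) (x + y))‖ ≤ 3 * δ := by
  have hsum : y + y + x = x + y + y := by rw [add_comm, add_assoc]
  calc ‖f (x + x) (y + y) + f x x + f y y - (f x y + f x y + f (x + y) (x + y))‖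
      = ‖(f (x + x) (y + y) + f x x - (f (y + y + x) x + f (y + y) x))
          + (f (y + y) x + f y y - (f (x + y) y + f x y))
          + (f (x + y + y) x + f (x + y) y - (f (x + y) (x + y) + f x y))‖ := by
        rw [hsum]; congr 1; abel
    _ ≤ δ + δ + δ :=
        norm_add_le_of_le (norm_add_le_of_le (hf x x (y + y)) (hf y y x)) (hf (x + y) y x)
    _ = 3 * δ := by ring

theorem norm_sub_le_of_diagonal
    (hf : ∀ x y z, ‖f (x + y) z + f x y - (f (z + y) x + f z y)‖ ≤ δ)
    (hdouble : ∀ x y, ‖f (x + x) (y + y) - f x y‖ ≤ η)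
    (hdiag : ∀ x, ‖f x x - c‖ ≤ θ) (x y : S) :
    ‖f x y - c‖ ≤ 3 * δ + η + 3 * θ := by
  have hdefect := norm_doubling_defect_le hf x y
  calc ‖f x y - c‖
      = ‖((f (x + x) (y + y) - f x y) + (f x x - c) + (f y y - c))
          - ((f (x + x) (y + y) + f x x + f y y - (f x y + f x y + f (x + y) (x + y)))
            + (f (x + y) (x + y) - c))‖ := by congr 1; abel
    _ ≤ (η + θ + θ) + (3 * δ + θ) :=
        norm_sub_le_of_le
          (norm_add_le_of_le (norm_add_le_of_le (hdouble x y) (hdiag x)) (hdiag y))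
          (norm_add_le_of_le hdefect (hdiag (x + y)))
    _ = 3 * δ + η + 3 * θ := by ring

theorem norm_sub_two_nsmul_le_of_diagonal
    (hG : ∀ x y z, ‖G x y z - (f (x + y) z + f x y)‖ ≤ κ)
    (hrev : ∀ x y z, ‖G x y z - G z y x‖ ≤ ε)
    (hdouble : ∀ x y, ‖f (x + x) (y + y) - f x y‖ ≤ η)
    (hdiag : ∀ x, ‖f x x - c‖ ≤ θ) (x y z : S) :
    ‖G x y z - 2 • c‖ ≤ 2 * η + 6 * θ + 13 * κ + 6 * ε := by
  have hfc := norm_sub_le_of_diagonal (norm_cocycle_sub_reverse_le hG hrev) hdouble hdiag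
  calc ‖G x y z - 2 • c‖
      = ‖(G x y z - (f (x + y) z + f x y)) + (f (x + y) z - c) + (f x y - c)‖ := by
        congr 1; abel
    _ ≤ κ + (3 * (2 * κ + ε) + η + 3 * θ) + (3 * (2 * κ + ε) + η + 3 * θ) :=
        norm_add_le_of_le (norm_add_le_of_le (hG x y z) (hfc (x + y) z)) (hfc x y)
    _ = 2 * η + 6 * θ + 13 * κ + 6 * ε := by ring

end EntropyEquation

theorem entropy_equation_stability_alpha_zero_general {K E : Type*}
    [Semiring K] [PartialOrder K] [IsStrictOrderedRing K] [SeminormedAddCommGroup E]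
    {ε₁ ε₂ ε₃ : ℝ} {H : K → K → K → E}
    (hrev : ∀ x y z : K, 0 < x → 0 < y → 0 < z → ‖H x y z - H z y x‖ ≤ ε₁)
    (hswap : ∀ x z : K, 0 < x → 0 < z → ‖H x 0 z - H x z 0‖ ≤ ε₁)
    (heq : ∀ x y z : K, 0 < x → 0 < y → 0 < z → ‖H x y z - H (x + y) 0 z - H x y 0‖ ≤ ε₂)
    (hhom : ∀ t x y : K, 0 < t → 0 < x → 0 < y → ‖H (t * x) (t * y) 0 - H x y 0‖ ≤ ε₃)
    {x y z : K} (hx : 0 < x) (hy : 0 < y) (hz : 0 < z) :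
    ‖H x y z - 2 • H 1 1 0‖ ≤ 8 * ε₃ + 13 * ε₂ + 19 * ε₁ := by
  have hentropy (x y z : {x : K // 0 < x}) :
      ‖H x y z - (H ↑(x + y) z 0 + H x y 0)‖ ≤ ε₂ + ε₁ := by
    calc ‖H x y z - (H ↑(x + y) z 0 + H x y 0)‖
        = ‖(H x y z - H (x + y) 0 z - H x y 0) + (H (x + y) 0 z - H (x + y) z 0)‖ := by
          rw [Positive.coe_add]; congr 1; abel
      _ ≤ ε₂ + ε₁ :=
          norm_add_le_of_le (heq x y z x.2 y.2 z.2) (hswap (x + y) z (add_pos x.2 y.2) z.2)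
  have hdouble (x y : {x : K // 0 < x}) : ‖H ↑(x + x) ↑(y + y) 0 - H x y 0‖ ≤ ε₃ := by
    simpa only [Positive.coe_add, two_mul] using hhom 2 x y two_pos x.2 y.2
  have hdiag (x : {x : K // 0 < x}) : ‖H x x 0 - H 1 1 0‖ ≤ ε₃ := by
    simpa only [mul_one] using hhom x 1 1 x.2 one_pos one_pos
  have hclose := EntropyEquation.norm_sub_two_nsmul_le_of_diagonal
    (G := fun x y z : {x : K // 0 < x} ↦ H x y z) (f := fun x y ↦ H x y 0) hentropy
    (fun x y z ↦ hrev x y z x.2 y.2 z.2) hdouble hdiag ⟨x, hx⟩ ⟨y, hy⟩ ⟨z, hz⟩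
  linarith

/-- Hyers–Ulam stability of the entropy equation, case α = 0:
if `H` is approximately symmetric on `D`, approximately satisfies the entropy
equation on `D°` and is approximately positively homogeneous of degree 0, then
`H` is close to a constant on `D°`, with bound `8ε₃ + 25ε₂ + 49ε₁`. -/
theorem entropy_equation_stability_alpha_zero
    (ε₁ ε₂ ε₃ : ℝ) (hε₁ : 0 ≤ ε₁) (hε₂ : 0 ≤ ε₂) (hε₃ : 0 ≤ ε₃)
    (H : ℝ → ℝ → ℝ → ℝ)
    (hsym : ∀ x y z : ℝ, 0 ≤ x → 0 ≤ y → 0 ≤ z → 0 < x + y + z →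
      ∀ σ : Equiv.Perm (Fin 3),
        |H x y z - H (![x, y, z] (σ 0)) (![x, y, z] (σ 1)) (![x, y, z] (σ 2))| ≤ ε₁)
    (heq : ∀ x y z : ℝ, 0 < x → 0 < y → 0 < z →
      |H x y z - H (x + y) 0 z - H x y 0| ≤ ε₂)
    (hhom : ∀ t x y : ℝ, 0 < t → 0 < x → 0 < y →
      |H (t * x) (t * y) 0 - H x y 0| ≤ ε₃) :
    ∃ a : ℝ, ∀ x y z : ℝ, 0 < x → 0 < y → 0 < z →
      |H x y z - a| ≤ 8 * ε₃ + 25 * ε₂ + 49 * ε₁ := by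
  refine ⟨2 • H 1 1 0, fun x y z hx hy hz ↦ ?_⟩
  have hclose := entropy_equation_stability_alpha_zero_general (H := H)
    (fun x y z hx hy hz ↦ hsym x y z hx.le hy.le hz.le (by positivity) (Equiv.swap 0 2))
    (fun x z hx hz ↦ hsym x 0 z hx.le le_rfl hz.le (by positivity) (Equiv.swap 1 2))
    heq hhom hx hy hz
  exact hclose.trans (by linarith)
end

section
/- Let α ∈ ℝ with α ∉ {0,1}, let ε₁, ε₂, ε₃ be nonnegative real numbers and let H : D → ℝ satisfy: (i) |H(x,y,z) − H(σ(x),σ(y),σ(z))| ≤ ε₁ for all (x,y,z) ∈ D and every permutation σ of the three coordinates; (ii) |H(x,y,z) − H(x+y,0,z) − H(x,y,0)| ≤ ε₂ for all (x,y,z) ∈ D°; (iii) |H(tx,ty,0) − t^α·H(x,y,0)| ≤ ε₃ for all t,x,y > 0. Then there exists a constant c ∈ ℝ such that |H(x,y,z) − c·[(x+y+z)^α − x^α − y^α − z^α]| ≤ ε₁ + ε₂ for all (x,y,z) ∈ D°. -/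
/-!
Write `f x y = H x y 0`. A vector `a` with `t ^ α • a` bounded in `t > 0` vanishes when `α ≠ 0`, so
rescaling the arguments turns approximate identities for `f` into exact ones: `f` is homogeneous of
degree `α`, symmetric, and, since `H x y z` is within bounded distance of `f (x + y) z + f x y`, a
cocycle. Any symmetric cocycle satisfies
`f (2x) (2y) = 2 f x y + f (x + y) (x + y) - f x x - f y y`. By homogeneity this reads
`(2 ^ α - 2) f x y = ((x + y) ^ α - x ^ α - y ^ α) f 1 1`, which determines `f` when `α ≠ 1`.
-/

open Set

section RescalingPrinciple

variable {E : Type*} [NormedAddCommGroup E] [NormedSpace ℝ E] {α : ℝ}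

theorem eq_zero_of_norm_rpow_smul_le (hα : α ≠ 0) {a : E} {C : ℝ}
    (h : ∀ t : ℝ, 0 < t → ‖t ^ α • a‖ ≤ C) : a = 0 := by
  by_contra ha
  have hC : 0 ≤ C := (norm_nonneg _).trans (h 1 one_pos)
  have ha_pos : 0 < ‖a‖ := norm_pos_iff.mpr ha
  have hr : 0 < (C + 1) / ‖a‖ := by positivity
  have hle := h (((C + 1) / ‖a‖) ^ α⁻¹) (Real.rpow_pos_of_pos hr _)
  rw [Real.rpow_inv_rpow hr.le hα, norm_smul, Real.norm_of_nonneg hr.le,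
    div_mul_cancel₀ _ ha_pos.ne'] at hle
  linarith

theorem eq_of_norm_rpow_smul_sub_le (hα : α ≠ 0) {a b : E} {C : ℝ}
    (h : ∀ t : ℝ, 0 < t → ‖t ^ α • a - t ^ α • b‖ ≤ C) : a = b :=
  sub_eq_zero.mp <| eq_zero_of_norm_rpow_smul_le hα fun t ht => by
    simpa only [smul_sub] using h t ht

theorem map_smul_eq_rpow_smul_of_norm_sub_le {X : Type*} [MulAction ℝ X] (hα : α ≠ 0)
    {S : Set X} (hS : ∀ t : ℝ, 0 < t → ∀ x ∈ S, t • x ∈ S) {f : X → E} {C : X → ℝ}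
    (hf : ∀ t : ℝ, 0 < t → ∀ x ∈ S, ‖f (t • x) - t ^ α • f x‖ ≤ C x)
    {t : ℝ} (ht : 0 < t) {x : X} (hx : x ∈ S) : f (t • x) = t ^ α • f x := by
  refine eq_of_norm_rpow_smul_sub_le hα (C := C (t • x) + C x) fun s hs => ?_
  have hst : ‖f (s • t • x) - s ^ α • t ^ α • f x‖ ≤ C x := by
    simpa only [mul_smul, Real.mul_rpow hs.le ht.le] using hf (s * t) (mul_pos hs ht) x hx
  calc ‖s ^ α • f (t • x) - s ^ α • t ^ α • f x‖
      ≤ ‖s ^ α • f (t • x) - f (s • t • x)‖ + ‖f (s • t • x) - s ^ α • t ^ α • f x‖ :=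
        norm_sub_le_norm_sub_add_norm_sub _ _ _
    _ ≤ C (t • x) + C x := by
        rw [norm_sub_rev]
        exact add_le_add (hf s hs _ (hS t ht x hx)) hst

end RescalingPrinciple

theorem symmetric_cocycle_add_self {M A : Type*} [AddCommSemigroup M] [AddCommGroup A]
    {f : M → M → A} (hsymm : ∀ x y, f x y = f y x)
    (hcocycle : ∀ x y z, f (x + y) z + f x y = f x (y + z) + f y z) (x y : M) :
    f (x + x) (y + y) = 2 • f x y + f (x + y) (x + y) - f x x - f y y := by
  have split_yy : f (x + x + y) y + f (x + x) y = f (x + x) (y + y) + f y y :=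
    hcocycle (x + x) y y
  have split_xx : f (x + x) y + f x x = f x (x + y) + f x y := hcocycle x x y
  have split_xy : f (x + x + y) y + f x (x + y) = f (x + y) (x + y) + f x y := by
    rw [hsymm x (x + y), add_right_comm x x y]
    exact hcocycle (x + y) x y
  grind

/-- Positive homogeneity of degree `α` of a function of two variables on the open quadrant
`x, y > 0`, the exact counterpart of the approximate homogeneity of `H x y 0`; nothing is required of
`f` elsewhere. -/
def IsPosHomogeneous {E : Type*} [SMul ℝ E] (α : ℝ) (f : ℝ → ℝ → E) : Prop :=
  ∀ t x y : ℝ, 0 < t → 0 < x → 0 < y → f (t * x) (t * y) = t ^ α • f x y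

namespace IsPosHomogeneous

variable {α : ℝ}

section Module

variable {E : Type*} [AddCommGroup E] [Module ℝ E] {f : ℝ → ℝ → E}

theorem apply_self (hf : IsPosHomogeneous α f) {x : ℝ} (hx : 0 < x) :
    f x x = x ^ α • f 1 1 := by
  simpa only [mul_one] using hf x 1 1 hx one_pos one_pos

theorem rpow_smul_add (hf : IsPosHomogeneous α f) {t x y z : ℝ} (ht : 0 < t) (hx : 0 < x)
    (hy : 0 < y) (hz : 0 < z) :
    t ^ α • (f (x + y) z + f x y) = f (t * x + t * y) (t * z) + f (t * x) (t * y) := by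
  rw [smul_add, ← hf t _ z ht (add_pos hx hy) hz, ← hf t x y ht hx hy, mul_add]

theorem eq_smul_of_symmetric_cocycle (hf : IsPosHomogeneous α f) (hα : α ≠ 1)
    (hsymm : ∀ x y : ℝ, 0 < x → 0 < y → f x y = f y x)
    (hcocycle : ∀ x y z : ℝ, 0 < x → 0 < y → 0 < z →
      f (x + y) z + f x y = f x (y + z) + f y z)
    {x y : ℝ} (hx : 0 < x) (hy : 0 < y) :
    f x y = ((x + y) ^ α - x ^ α - y ^ α) • ((2 : ℝ) ^ α - 2)⁻¹ • f 1 1 := by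
  have two_rpow_ne : (2 : ℝ) ^ α - 2 ≠ 0 := fun h => hα <|
    (Real.rpow_right_inj two_pos (by norm_num)).mp ((sub_eq_zero.mp h).trans (Real.rpow_one 2).symm)
  have doubling : f (x + x) (y + y) = 2 • f x y + f (x + y) (x + y) - f x x - f y y :=
    symmetric_cocycle_add_self (M := {r : ℝ // 0 < r}) (f := fun u v => f u v)
      (fun u v => hsymm u v u.2 v.2) (fun u v w => hcocycle u v w u.2 v.2 w.2) ⟨x, hx⟩ ⟨y, hy⟩
  rw [← two_mul, ← two_mul, hf 2 x y two_pos hx hy, hf.apply_self (add_pos hx hy),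
    hf.apply_self hx, hf.apply_self hy] at doubling
  have scaled : ((2 : ℝ) ^ α - 2) • f x y = ((x + y) ^ α - x ^ α - y ^ α) • f 1 1 := by
    rw [sub_smul, doubling]
    module
  rw [smul_comm, ← scaled, inv_smul_smul₀ two_rpow_ne]

end Module

section Normed

variable {E : Type*} [NormedAddCommGroup E] [NormedSpace ℝ E] {f : ℝ → ℝ → E}

theorem of_norm_sub_le (hα : α ≠ 0) {ε : ℝ}
    (h : ∀ t x y : ℝ, 0 < t → 0 < x → 0 < y → ‖f (t * x) (t * y) - t ^ α • f x y‖ ≤ ε) :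
    IsPosHomogeneous α f := fun _t x y ht hx hy =>
  map_smul_eq_rpow_smul_of_norm_sub_le (X := ℝ × ℝ) (S := Ioi 0 ×ˢ Ioi 0)
    (f := fun p => f p.1 p.2) (C := fun _ => ε) hα
    (fun _ hs _ hp => ⟨mul_pos hs hp.1, mul_pos hs hp.2⟩)
    (fun s hs p hp => h s p.1 p.2 hs hp.1 hp.2) ht (x := (x, y)) ⟨hx, hy⟩

theorem symm_of_norm_sub_le (hf : IsPosHomogeneous α f) (hα : α ≠ 0) {ε : ℝ}
    (h : ∀ x y : ℝ, 0 < x → 0 < y → ‖f x y - f y x‖ ≤ ε) {x y : ℝ} (hx : 0 < x) (hy : 0 < y) :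
    f x y = f y x :=
  eq_of_norm_rpow_smul_sub_le hα fun t ht => by
    rw [← hf t x y ht hx hy, ← hf t y x ht hy hx]
    exact h _ _ (mul_pos ht hx) (mul_pos ht hy)

theorem add_eq_cyclic_of_norm_sub_le (hf : IsPosHomogeneous α f) (hα : α ≠ 0)
    {G : ℝ → ℝ → ℝ → E} {δ ε : ℝ}
    (hG : ∀ x y z : ℝ, 0 < x → 0 < y → 0 < z → ‖G x y z - (f (x + y) z + f x y)‖ ≤ δ)
    (hcyclic : ∀ x y z : ℝ, 0 < x → 0 < y → 0 < z → ‖G x y z - G y z x‖ ≤ ε)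
    {x y z : ℝ} (hx : 0 < x) (hy : 0 < y) (hz : 0 < z) :
    f (x + y) z + f x y = f (y + z) x + f y z := by
  have bounded : ∀ u v w : ℝ, 0 < u → 0 < v → 0 < w →
      ‖(f (u + v) w + f u v) - (f (v + w) u + f v w)‖ ≤ δ + (ε + δ) := fun u v w hu hv hw =>
    calc ‖(f (u + v) w + f u v) - (f (v + w) u + f v w)‖
        ≤ ‖(f (u + v) w + f u v) - G u v w‖ + ‖G u v w - (f (v + w) u + f v w)‖ :=
          norm_sub_le_norm_sub_add_norm_sub _ _ _
      _ ≤ ‖(f (u + v) w + f u v) - G u v w‖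
            + (‖G u v w - G v w u‖ + ‖G v w u - (f (v + w) u + f v w)‖) := by
          gcongr
          exact norm_sub_le_norm_sub_add_norm_sub _ _ _
      _ ≤ δ + (ε + δ) := by
          rw [norm_sub_rev]
          gcongr
          exacts [hG u v w hu hv hw, hcyclic u v w hu hv hw, hG v w u hv hw hu]
  refine eq_of_norm_rpow_smul_sub_le hα (C := δ + (ε + δ)) fun t ht => ?_
  rw [hf.rpow_smul_add ht hx hy hz, hf.rpow_smul_add ht hy hz hx]
  exact bounded _ _ _ (mul_pos ht hx) (mul_pos ht hy) (mul_pos ht hz)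

end Normed

end IsPosHomogeneous

section EntropyEquation

variable {E : Type*} [NormedAddCommGroup E] {ε₁ ε₂ : ℝ} {H : ℝ → ℝ → ℝ → E}

theorem norm_sub_add_le_of_approx_entropy
    (hswap : ∀ x y : ℝ, 0 < x → 0 < y → ‖H x 0 y - H x y 0‖ ≤ ε₁)
    (heq : ∀ x y z : ℝ, 0 < x → 0 < y → 0 < z → ‖H x y z - H (x + y) 0 z - H x y 0‖ ≤ ε₂)
    (x y z : ℝ) (hx : 0 < x) (hy : 0 < y) (hz : 0 < z) :
    ‖H x y z - (H (x + y) z 0 + H x y 0)‖ ≤ ε₁ + ε₂ :=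
  calc ‖H x y z - (H (x + y) z 0 + H x y 0)‖
      = ‖(H (x + y) 0 z - H (x + y) z 0) + (H x y z - H (x + y) 0 z - H x y 0)‖ := by
        congr 1; abel
    _ ≤ ε₁ + ε₂ := norm_add_le_of_le (hswap _ _ (add_pos hx hy) hz) (heq x y z hx hy hz)

theorem entropy_equation_stability_alpha_ne_zero_one_general [NormedSpace ℝ E]
    {α ε₃ : ℝ} (hα0 : α ≠ 0) (hα1 : α ≠ 1)
    (hsym : ∀ x y z : ℝ, 0 ≤ x → 0 ≤ y → 0 ≤ z → 0 < x + y + z →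
      ∀ σ : Equiv.Perm (Fin 3),
        ‖H x y z - H (![x, y, z] (σ 0)) (![x, y, z] (σ 1)) (![x, y, z] (σ 2))‖ ≤ ε₁)
    (heq : ∀ x y z : ℝ, 0 < x → 0 < y → 0 < z →
      ‖H x y z - H (x + y) 0 z - H x y 0‖ ≤ ε₂)
    (hhom : ∀ t x y : ℝ, 0 < t → 0 < x → 0 < y →
      ‖H (t * x) (t * y) 0 - t ^ α • H x y 0‖ ≤ ε₃) :
    ∃ c : E, ∀ x y z : ℝ, 0 < x → 0 < y → 0 < z →
      ‖H x y z - ((x + y + z) ^ α - x ^ α - y ^ α - z ^ α) • c‖ ≤ ε₁ + ε₂ := by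
  have hswap₀₁ : ∀ x y : ℝ, 0 < x → 0 < y → ‖H x y 0 - H y x 0‖ ≤ ε₁ := fun x y hx hy =>
    hsym x y 0 hx.le hy.le le_rfl (by positivity) (Equiv.swap 0 1)
  have hswap₁₂ : ∀ x y : ℝ, 0 < x → 0 < y → ‖H x 0 y - H x y 0‖ ≤ ε₁ := fun x y hx hy =>
    hsym x 0 y hx.le le_rfl hy.le (by positivity) (Equiv.swap 1 2)
  have hcyclic : ∀ x y z : ℝ, 0 < x → 0 < y → 0 < z → ‖H x y z - H y z x‖ ≤ ε₁ :=
    fun x y z hx hy hz => hsym x y z hx.le hy.le hz.le (by positivity) (finRotate 3)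
  have happrox := norm_sub_add_le_of_approx_entropy hswap₁₂ heq
  have hf : IsPosHomogeneous α fun x y => H x y 0 := .of_norm_sub_le hα0 hhom
  have hsymm : ∀ x y : ℝ, 0 < x → 0 < y → H x y 0 = H y x 0 := fun x y hx hy =>
    hf.symm_of_norm_sub_le hα0 hswap₀₁ hx hy
  have hcocycle : ∀ x y z : ℝ, 0 < x → 0 < y → 0 < z →
      H (x + y) z 0 + H x y 0 = H x (y + z) 0 + H y z 0 := fun x y z hx hy hz => by
    rw [hsymm x (y + z) hx (add_pos hy hz)]
    exact hf.add_eq_cyclic_of_norm_sub_le hα0 happrox hcyclic hx hy hz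
  refine ⟨((2 : ℝ) ^ α - 2)⁻¹ • H 1 1 0, fun x y z hx hy hz => ?_⟩
  convert happrox x y z hx hy hz using 3
  rw [hf.eq_smul_of_symmetric_cocycle hα1 hsymm hcocycle hx hy,
    hf.eq_smul_of_symmetric_cocycle hα1 hsymm hcocycle (add_pos hx hy) hz]
  module

end EntropyEquation

/-- Hyers–Ulam stability of the entropy equation, case α ∉ {0, 1}:
if `H` is approximately symmetric on `D`, approximately satisfies the entropy
equation on `D°` and is approximately positively homogeneous of degree α, then
`H` is close to `c·[(x+y+z)^α − x^α − y^α − z^α]` on `D°`. -/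
theorem entropy_equation_stability_alpha_ne_zero_one
    (α : ℝ) (hα0 : α ≠ 0) (hα1 : α ≠ 1)
    (ε₁ ε₂ ε₃ : ℝ) (hε₁ : 0 ≤ ε₁) (hε₂ : 0 ≤ ε₂) (hε₃ : 0 ≤ ε₃)
    (H : ℝ → ℝ → ℝ → ℝ)
    (hsym : ∀ x y z : ℝ, 0 ≤ x → 0 ≤ y → 0 ≤ z → 0 < x + y + z →
      ∀ σ : Equiv.Perm (Fin 3),
        |H x y z - H (![x, y, z] (σ 0)) (![x, y, z] (σ 1)) (![x, y, z] (σ 2))| ≤ ε₁)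
    (heq : ∀ x y z : ℝ, 0 < x → 0 < y → 0 < z →
      |H x y z - H (x + y) 0 z - H x y 0| ≤ ε₂)
    (hhom : ∀ t x y : ℝ, 0 < t → 0 < x → 0 < y →
      |H (t * x) (t * y) 0 - t ^ α * H x y 0| ≤ ε₃) :
    ∃ c : ℝ, ∀ x y z : ℝ, 0 < x → 0 < y → 0 < z →
      |H x y z - c * ((x + y + z) ^ α - x ^ α - y ^ α - z ^ α)| ≤ ε₁ + ε₂ := by
  simpa only [Real.norm_eq_abs, smul_eq_mul, mul_comm] using
    entropy_equation_stability_alpha_ne_zero_one_general (H := H) hα0 hα1 hsym heq hhom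
end

section
/- Let α ∈ ℝ with α ≠ 1, and let H : D → ℝ be symmetric (invariant under every permutation of its three arguments), positively homogeneous of degree α (H(tx,ty,tz) = t^α·H(x,y,z) for all t > 0 and (x,y,z) ∈ D), and satisfy the entropy equation H(x,y,z) = H(x+y,0,z) + H(x,y,0) for all (x,y,z) ∈ D°. Then there exists a constant c ∈ ℝ such that H(x,y,z) = c·[(x+y+z)^α − x^α − y^α − z^α] for all (x,y,z) ∈ D°. -/
/-!
On the face `z = 0` the solution `H` restricts to a symmetric 2-cocycle `F x y = H x y 0` on the
additive semigroup of positive elements, and `H` is recovered as `F (x + y) z + F x y`. Every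
symmetric 2-cocycle satisfies
`F (x + x) (y + y) - 2 F x y = F (x + y) (x + y) - F x x - F y y`,
so as soon as doubling scales `F` by some `r ≠ 2`, the cocycle is a multiple of the coboundary of
its own diagonal. Homogeneity of degree `α` gives `r = 2 ^ α` and the diagonal
`F x x = x ^ α • F 1 1`, and `α ≠ 1` says exactly that `r ≠ 2`.
-/

section SymmetricCocycle

variable {S G k : Type*} [AddCommSemigroup S]

/-- A symmetric 2-cocycle on a commutative semigroup `S` with values in `G`, for the trivial
action. -/
structure IsSymmetricCocycle [Add G] (F : S → S → G) : Prop where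
  symm : ∀ x y, F x y = F y x
  cocycle : ∀ x y z, F (x + y) z + F x y = F x (y + z) + F y z

namespace IsSymmetricCocycle

theorem map_double_sub_two_nsmul [AddCommGroup G] {F : S → S → G} (hF : IsSymmetricCocycle F)
    (x y : S) :
    F (x + x) (y + y) - 2 • F x y = F (x + y) (x + y) - F x x - F y y := by
  have cocycle_x_x_2y := hF.cocycle x x (y + y)
  have cocycle_x_y_y := hF.cocycle x y y
  have cocycle_x_y_xy := hF.cocycle x y (x + y)
  rw [← hF.symm (x + y) y, add_left_comm y x y] at cocycle_x_y_xy
  linear_combination (norm := module) cocycle_x_x_2y - cocycle_x_y_y - cocycle_x_y_xy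

theorem eq_inv_smul_coboundary_diag [DivisionRing k] [AddCommGroup G] [Module k G]
    {F : S → S → G} (hF : IsSymmetricCocycle F) {r : k} (hr : r ≠ 2)
    (hdouble : ∀ x y, F (x + x) (y + y) = r • F x y) (x y : S) :
    F x y = (r - 2)⁻¹ • (F (x + y) (x + y) - F x x - F y y) := by
  rw [eq_inv_smul_iff₀ (sub_ne_zero.mpr hr), ← hF.map_double_sub_two_nsmul, hdouble, sub_smul,
    ofNat_smul_eq_nsmul]

end IsSymmetricCocycle

end SymmetricCocycle

section Cone

variable {M E : Type*} [AddCommMonoid M] [PartialOrder M]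

/-- Invariance of `H` under permutations of its arguments on the closed positive cone of `M³`
without its apex. -/
def IsConeSymmetric (H : M → M → M → E) : Prop :=
  ∀ x y z : M, 0 ≤ x → 0 ≤ y → 0 ≤ z → 0 < x + y + z → ∀ σ : Equiv.Perm (Fin 3),
    H x y z = H (![x, y, z] (σ 0)) (![x, y, z] (σ 1)) (![x, y, z] (σ 2))

/-- The entropy equation on the open positive cone of `M³`. -/
def SatisfiesEntropyEquation [Add E] (H : M → M → M → E) : Prop :=
  ∀ x y z : M, 0 < x → 0 < y → 0 < z → H x y z = H (x + y) 0 z + H x y 0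

/-- The restriction of `H` to the relatively open face `z = 0` of the positive cone, as a function
on the semigroup of positive elements. -/
def faceRestriction (H : M → M → M → E) (x y : {a : M // 0 < a}) : E :=
  H x y 0

namespace IsConeSymmetric

variable {H : M → M → M → E} {x y z : M}

theorem swap_left (hsym : IsConeSymmetric H) (hx : 0 ≤ x) (hy : 0 ≤ y) (hz : 0 ≤ z)
    (hxyz : 0 < x + y + z) : H x y z = H y x z := by
  have fixes_two : Equiv.swap (0 : Fin 3) 1 2 = 2 := by decide
  simpa [fixes_two] using hsym x y z hx hy hz hxyz (Equiv.swap 0 1)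

theorem swap_right (hsym : IsConeSymmetric H) (hx : 0 ≤ x) (hy : 0 ≤ y) (hz : 0 ≤ z)
    (hxyz : 0 < x + y + z) : H x y z = H x z y := by
  have fixes_zero : Equiv.swap (1 : Fin 3) 2 0 = 0 := by decide
  simpa [fixes_zero] using hsym x y z hx hy hz hxyz (Equiv.swap 1 2)

theorem rotate [AddLeftStrictMono M] (hsym : IsConeSymmetric H) (hx : 0 < x) (hy : 0 < y)
    (hz : 0 < z) : H x y z = H y z x := by
  rw [hsym.swap_left hx.le hy.le hz.le (add_pos (add_pos hx hy) hz),
    hsym.swap_right hy.le hx.le hz.le (add_pos (add_pos hy hx) hz)]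

end IsConeSymmetric

variable [AddLeftStrictMono M] {H : M → M → M → E}

theorem faceRestriction_comm (hsym : IsConeSymmetric H) (x y : {a : M // 0 < a}) :
    faceRestriction H x y = faceRestriction H y x :=
  hsym.swap_left x.2.le y.2.le le_rfl (by simpa using add_pos x.2 y.2)

theorem SatisfiesEntropyEquation.eq_faceRestriction_add [Add E] (heq : SatisfiesEntropyEquation H)
    (hsym : IsConeSymmetric H) (x y z : {a : M // 0 < a}) :
    H x y z = faceRestriction H (x + y) z + faceRestriction H x y := by
  have hxy : 0 < (x + y : M) := add_pos x.2 y.2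
  rw [heq x y z x.2 y.2 z.2,
    hsym.swap_right hxy.le le_rfl z.2.le (by simpa using add_pos hxy z.2)]
  rfl

theorem SatisfiesEntropyEquation.isSymmetricCocycle_faceRestriction [Add E]
    (heq : SatisfiesEntropyEquation H) (hsym : IsConeSymmetric H) :
    IsSymmetricCocycle (faceRestriction H) where
  symm := faceRestriction_comm hsym
  cocycle x y z := by
    -- The two sides of the cocycle identity are `H x y z` and `H y z x`.
    rw [← heq.eq_faceRestriction_add hsym, faceRestriction_comm hsym x (y + z),
      ← heq.eq_faceRestriction_add hsym, hsym.rotate x.2 y.2 z.2]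

end Cone

section Homogeneous

variable {R k E : Type*} [Semiring R] [PartialOrder R] {m : R → k} {H : R → R → R → E}

/-- Positive homogeneity of `H` on the closed positive cone of `R³` without its apex, where scaling
the arguments by `t` scales the value by `m t`. Homogeneity of degree `α` is the case
`m t = t ^ α`. -/
def IsConeHomogeneous [SMul k E] (m : R → k) (H : R → R → R → E) : Prop :=
  ∀ t : R, 0 < t → ∀ x y z : R, 0 ≤ x → 0 ≤ y → 0 ≤ z → 0 < x + y + z →
    H (t * x) (t * y) (t * z) = m t • H x y z

variable [IsStrictOrderedRing R]

namespace IsConeHomogeneous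

theorem map_mul_mul_zero [SMul k E] (hhom : IsConeHomogeneous m H) {t x y : R} (ht : 0 < t)
    (hx : 0 < x) (hy : 0 < y) : H (t * x) (t * y) 0 = m t • H x y 0 := by
  simpa using hhom t ht x y 0 hx.le hy.le le_rfl (by simpa using add_pos hx hy)

theorem faceRestriction_double [SMul k E] (hhom : IsConeHomogeneous m H) (x y : {a : R // 0 < a}) :
    faceRestriction H (x + x) (y + y) = m 2 • faceRestriction H x y := by
  simpa [faceRestriction, two_mul] using hhom.map_mul_mul_zero two_pos x.2 y.2

theorem faceRestriction_self [SMul k E] (hhom : IsConeHomogeneous m H) (x : {a : R // 0 < a}) :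
    faceRestriction H x x = m x • H 1 1 0 := by
  simpa [faceRestriction] using hhom.map_mul_mul_zero x.2 one_pos one_pos

theorem faceRestriction_eq [Field k] [AddCommGroup E] [Module k E] (hhom : IsConeHomogeneous m H)
    (hm : m 2 ≠ 2) (hcocycle : IsSymmetricCocycle (faceRestriction H)) (x y : {a : R // 0 < a}) :
    faceRestriction H x y = (m (x + y) - m x - m y) • (m 2 - 2)⁻¹ • H 1 1 0 := by
  rw [hcocycle.eq_inv_smul_coboundary_diag hm hhom.faceRestriction_double]
  simp only [hhom.faceRestriction_self, Positive.coe_add]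
  module

end IsConeHomogeneous

theorem entropy_equation_solution_alpha_ne_one_general [Field k] [AddCommGroup E] [Module k E]
    (m : R → k) (hm : m 2 ≠ 2) (H : R → R → R → E) (hsym : IsConeSymmetric H)
    (hhom : IsConeHomogeneous m H) (heq : SatisfiesEntropyEquation H) :
    ∃ c : E, ∀ x y z : R, 0 < x → 0 < y → 0 < z →
      H x y z = (m (x + y + z) - m x - m y - m z) • c := by
  have face_eq := hhom.faceRestriction_eq hm (heq.isSymmetricCocycle_faceRestriction hsym)
  refine ⟨(m 2 - 2)⁻¹ • H 1 1 0, fun x y z hx hy hz ↦ ?_⟩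
  lift x to {a : R // 0 < a} using hx
  lift y to {a : R // 0 < a} using hy
  lift z to {a : R // 0 < a} using hz
  rw [heq.eq_faceRestriction_add hsym, face_eq, face_eq, Positive.coe_add]
  module

end Homogeneous

theorem rpow_eq_self_iff {x α : ℝ} (hx₀ : 0 < x) (hx₁ : x ≠ 1) : x ^ α = x ↔ α = 1 := by
  simpa only [Real.rpow_one] using Real.rpow_right_inj (z := 1) hx₀ hx₁

/-- If `H` is symmetric on `D`, positively homogeneous of degree α ≠ 1 on `D` and
satisfies the entropy equation on `D°`, then
`H(x,y,z) = c·[(x+y+z)^α − x^α − y^α − z^α]` on `D°` for some constant `c`. -/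
theorem entropy_equation_solution_alpha_ne_one
    (α : ℝ) (hα : α ≠ 1)
    (H : ℝ → ℝ → ℝ → ℝ)
    (hsym : ∀ x y z : ℝ, 0 ≤ x → 0 ≤ y → 0 ≤ z → 0 < x + y + z →
      ∀ σ : Equiv.Perm (Fin 3),
        H x y z = H (![x, y, z] (σ 0)) (![x, y, z] (σ 1)) (![x, y, z] (σ 2)))
    (hhom : ∀ t : ℝ, 0 < t → ∀ x y z : ℝ, 0 ≤ x → 0 ≤ y → 0 ≤ z → 0 < x + y + z →
      H (t * x) (t * y) (t * z) = t ^ α * H x y z)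
    (heq : ∀ x y z : ℝ, 0 < x → 0 < y → 0 < z →
      H x y z = H (x + y) 0 z + H x y 0) :
    ∃ c : ℝ, ∀ x y z : ℝ, 0 < x → 0 < y → 0 < z →
      H x y z = c * ((x + y + z) ^ α - x ^ α - y ^ α - z ^ α) := by
  have two_rpow_ne_two : (2 : ℝ) ^ α ≠ 2 :=
    (rpow_eq_self_iff two_pos (OfNat.ofNat_ne_one 2)).not.mpr hα
  simpa only [smul_eq_mul, mul_comm] using
    entropy_equation_solution_alpha_ne_one_general (· ^ α) two_rpow_ne_two H hsym hhom heq
end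

section
/- Let H : D → ℝ be symmetric (invariant under every permutation of its three arguments), positively homogeneous of degree 1 (H(tx,ty,tz) = t·H(x,y,z) for all t > 0 and (x,y,z) ∈ D), satisfy H(x,y,z) = H(x+y,z,0) + H(x,y,0) for all (x,y,z) ∈ D, and suppose the map x ↦ H(1−x, x, 0) is Lebesgue measurable on the open interval (0,1). Then, and only then, H(x,y,z) = x·log x + y·log y + z·log z − (x+y+z)·log(x+y+z) for all (x,y,z) ∈ D, up to a constant multiple of the logarithm (i.e. with an arbitrary base for the logarithm), with the convention 0·log 0 = 0. -/
/-!
The branching equation together with symmetry says that `F x y = H x y 0` is a symmetric additive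
cocycle on `(0, ∞)`, homogeneous of degree `1`. Hence, for every `z > 0`,
`F r 1 = r * F ((1 + z) / r) 1 + F z 1 - (r + 1) * F (z / (r + 1)) 1`,
where `z` enters only through affine maps. A measurable function is bounded off a set of small
measure, and for `r` in a compact interval some `z ∈ (1, 2)` is sent outside that set by all three
maps, so `F` is locally bounded and therefore locally integrable. Integrating the cocycle equation
exhibits `F` as the coboundary `g x + g y - g (x + y)` of a continuous `g`. By homogeneity
`x ↦ g (t * x) - t * g x` is additive, hence linear, and then `u ↦ g (exp u) / exp u - g 1` is
additive, hence linear, so `g x = x * (k * log x + g 1)`.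
-/

open MeasureTheory Set Filter Topology

section Additive

theorem exists_addMonoidHom_eqOn_Ioi {α G : Type*} [AddCommGroup α] [LinearOrder α]
    [IsOrderedAddMonoid α] [AddCommGroup G] {a : α → G}
    (ha : ∀ x y, 0 < x → 0 < y → a (x + y) = a x + a y) : ∃ φ : α →+ G, EqOn φ a (Ioi 0) := by
  rcases subsingleton_or_nontrivial α with hα | hα
  · exact ⟨0, fun x hx => (hx.ne (Subsingleton.elim 0 x)).elim⟩
  obtain ⟨e, he⟩ := exists_zero_lt (α := α)
  have sub_eq_sub : ∀ {p q p' q' : α}, 0 < p → 0 < q → 0 < p' → 0 < q' → p + q' = p' + q →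
      a p - a q = a p' - a q' := fun hp hq hp' hq' h => by
    rw [sub_eq_sub_iff_add_eq_add, ← ha _ _ hp hq', ← ha _ _ hp' hq, h]
  have hden : ∀ u : α, 0 < |u| + e := fun u => by positivity
  have hnum : ∀ u : α, 0 < u + (|u| + e) := fun u => by
    rw [← add_assoc]
    exact add_pos_of_nonneg_of_pos (neg_le_iff_add_nonneg'.1 (neg_le_abs u)) he
  refine ⟨AddMonoidHom.mk' (fun u => a (u + (|u| + e)) - a (|u| + e)) fun u v => ?_, fun x hx => ?_⟩
  · rw [← add_sub_add_comm, ← ha _ _ (hnum u) (hnum v), ← ha _ _ (hden u) (hden v)]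
    exact sub_eq_sub (hnum _) (hden _) (add_pos (hnum u) (hnum v)) (add_pos (hden u) (hden v))
      (by abel)
  · simp only [AddMonoidHom.mk'_apply]
    rw [ha _ _ hx (hden x), add_sub_cancel_right]

theorem eq_smul_of_additive_of_continuousAt {E : Type*} [AddCommGroup E] [Module ℝ E]
    [TopologicalSpace E] [IsTopologicalAddGroup E] [ContinuousSMul ℝ E] [T2Space E] {a : ℝ → E}
    (ha : ∀ x y, 0 < x → 0 < y → a (x + y) = a x + a y) {c : ℝ} (hc : 0 < c)
    (hcont : ContinuousAt a c) {x : ℝ} (hx : 0 < x) : a x = x • a 1 := by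
  obtain ⟨φ, hφ⟩ := exists_addMonoidHom_eqOn_Ioi ha
  have hφc : ContinuousAt φ c := hcont.congr (hφ.eventuallyEq_of_mem (Ioi_mem_nhds hc)).symm
  have hφ0 : ContinuousAt φ 0 := by
    have hshift : ContinuousAt (fun u => φ (c + u) - φ c) 0 :=
      (ContinuousAt.comp (by simpa using hφc) (by fun_prop)).sub continuousAt_const
    simpa using hshift
  have hφx := map_real_smul φ (continuous_of_continuousAt_zero φ hφ0) x 1
  rwa [smul_eq_mul, mul_one, hφ hx, hφ (mem_Ioi.2 one_pos)] at hφx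

end Additive

section Measure

theorem exists_measure_lt_norm_lt {α E : Type*} [MeasurableSpace α] [NormedAddCommGroup E]
    [CompleteSpace E] [SecondCountableTopology E] [MeasurableSpace E] [BorelSpace E]
    {μ : Measure α} [IsFiniteMeasure μ] {f : α → E} (hf : AEMeasurable f μ) {ε : ENNReal}
    (hε : 0 < ε) : ∃ C : ℝ, 0 ≤ C ∧ μ {x | C < ‖f x‖} < ε := by
  have htight := tendsto_measure_norm_gt_of_isTightMeasureSet
    (isTightMeasureSet_singleton (μ := μ.map f))
  simp only [mem_singleton_iff, iSup_iSup_eq_left] at htight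
  obtain ⟨C, hC, hC0⟩ := ((htight.eventually_lt_const hε).and (eventually_ge_atTop 0)).exists
  rw [Measure.map_apply_of_aemeasurable hf
    (measurableSet_lt measurable_const measurable_norm)] at hC
  exact ⟨C, hC0, hC⟩

theorem exists_mem_forall_add_div_notMem {ι : Type*} [Fintype ι] {c : ι → ℝ} (hc : ∀ i, 0 < c i)
    (d : ι → ℝ) {s B : Set ℝ} (hB : ENNReal.ofReal (∑ i, c i) * volume B < volume s) :
    ∃ z ∈ s, ∀ i, (d i + z) / c i ∉ B := by
  by_contra! hcover
  have hvol : ∀ i, volume {z | (d i + z) / c i ∈ B} = ENNReal.ofReal (c i) * volume B := by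
    intro i
    have hpre : {z | (d i + z) / c i ∈ B} = (d i + ·) ⁻¹' ((· * (c i)⁻¹) ⁻¹' B) := rfl
    rw [hpre, measure_preimage_add, Real.volume_preimage_mul_right (inv_ne_zero (hc i).ne'),
      inv_inv, abs_of_pos (hc i)]
  refine hB.not_ge ?_
  calc volume s ≤ volume (⋃ i, {z | (d i + z) / c i ∈ B}) :=
        measure_mono fun z hz => mem_iUnion.2 (hcover z hz)
    _ ≤ ∑ i, volume {z | (d i + z) / c i ∈ B} := measure_iUnion_fintype_le _ _
    _ = ENNReal.ofReal (∑ i, c i) * volume B := by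
        rw [ENNReal.ofReal_sum_of_nonneg fun i _ => (hc i).le, Finset.sum_mul]
        simp only [hvol]

theorem exists_mem_Ioo_one_two_notMem {B : Set ℝ} {r : ℝ} (hr : 0 < r)
    (hB : volume B < ENNReal.ofReal (2 * r + 2)⁻¹) :
    ∃ z ∈ Ioo (1 : ℝ) 2, (1 + z) / r ∉ B ∧ z ∉ B ∧ z / (r + 1) ∉ B := by
  have hsum : ∑ i, ![r, 1, r + 1] i = 2 * r + 2 := by
    simp only [Fin.sum_univ_three, Matrix.cons_val]
    ring
  have hsmall : ENNReal.ofReal (∑ i, ![r, 1, r + 1] i) * volume B < volume (Ioo (1 : ℝ) 2) := by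
    have hpos : 0 < 2 * r + 2 := by positivity
    calc ENNReal.ofReal (∑ i, ![r, 1, r + 1] i) * volume B
        < ENNReal.ofReal (2 * r + 2) * ENNReal.ofReal (2 * r + 2)⁻¹ := by
          rw [hsum]
          exact ENNReal.mul_lt_mul_right (ENNReal.ofReal_pos.2 hpos).ne' ENNReal.ofReal_ne_top hB
      _ = volume (Ioo (1 : ℝ) 2) := by
          rw [← ENNReal.ofReal_mul hpos.le, mul_inv_cancel₀ hpos.ne', Real.volume_Ioo]
          norm_num
  obtain ⟨z, hz, hzB⟩ := exists_mem_forall_add_div_notMem (c := ![r, 1, r + 1])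
    (by simp [Fin.forall_fin_succ, hr, add_pos hr one_pos]) ![1, 0, 0] hsmall
  exact ⟨z, hz, by simpa using hzB 0, by simpa using hzB 1, by simpa using hzB 2⟩

theorem quasiMeasurePreserving_restrict_of_leftInvOn {E : Type*} [NormedAddCommGroup E]
    [NormedSpace ℝ E] [FiniteDimensional ℝ E] [MeasurableSpace E] [BorelSpace E] {μ : Measure E}
    [μ.IsAddHaarMeasure] {φ ψ : E → E} {s t : Set E} (hs : MeasurableSet s)
    (hφ : Measurable φ) (hst : MapsTo φ s t) (hψ : DifferentiableOn ℝ ψ t)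
    (hinv : LeftInvOn ψ φ s) :
    Measure.QuasiMeasurePreserving φ (μ.restrict s) (μ.restrict t) := by
  refine ⟨hφ, Measure.AbsolutelyContinuous.mk fun B hB hBt => ?_⟩
  rw [Measure.restrict_apply hB] at hBt
  rw [Measure.map_apply hφ hB, Measure.restrict_apply' hs]
  refine measure_mono_null ?_ (addHaar_image_eq_zero_of_differentiableOn_of_addHaar_eq_zero μ
    (hψ.mono inter_subset_right) hBt)
  exact fun x hx => ⟨φ x, ⟨hx.1, hst hx.2⟩, hinv hx.2⟩

theorem continuousOn_integral_of_isOpen {E : Type*} [NormedAddCommGroup E]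
    [NormedSpace ℝ E] {f : ℝ → E} {μ : Measure ℝ} [NullSingletonClass μ] {s : Set ℝ}
    (hs : IsOpen s) (hf : ∀ a ∈ s, ∀ b ∈ s, IntervalIntegrable f μ a b) {c : ℝ} (hc : c ∈ s) :
    ContinuousOn (fun x => ∫ t in c..x, f t ∂μ) s := by
  intro x hx
  obtain ⟨a, b, ⟨hax, hxb⟩, hab⟩ := mem_nhds_iff_exists_Ioo_subset.1 (hs.mem_nhds hx)
  obtain ⟨a', haa', ha'x⟩ := exists_between hax
  obtain ⟨b', hxb', hb'b⟩ := exists_between hxb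
  have ha's : a' ∈ s := hab ⟨haa', ha'x.trans hxb⟩
  have hb's : b' ∈ s := hab ⟨hax.trans hxb', hb'b⟩
  have hcont : ContinuousAt (fun y => ∫ t in a'..y, f t ∂μ) x :=
    (intervalIntegral.continuousOn_primitive_interval' (hf a' ha's b' hb's)
      left_mem_uIcc).continuousAt
      (by rw [uIcc_of_le (ha'x.trans hxb').le]; exact Icc_mem_nhds ha'x hxb')
  refine ((hcont.const_add (∫ t in c..a', f t ∂μ)).congr ?_).continuousWithinAt
  filter_upwards [hs.mem_nhds hx] with y hy
  exact intervalIntegral.integral_add_adjacent_intervals (hf c hc a' ha's) (hf a' ha's y hy)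

end Measure

section Cocycle

variable {F : ℝ → ℝ → ℝ}

/-- The additive `2`-cocycle equation on the semigroup `(0, ∞)`; nothing is asked of `F` at
nonpositive arguments. -/
def IsPosCocycle (F : ℝ → ℝ → ℝ) : Prop :=
  ∀ ⦃x y z⦄, 0 < x → 0 < y → 0 < z → F (x + y) z + F x y = F x (y + z) + F y z

/-- A primitive of the cocycle `F`, i.e. a function whose coboundary is `F`. Integrating the cocycle
equation over `z ∈ [1, 2]` expresses `F x y` through `∫ z in 1..2, F · z` and the shifted integral
`∫ t in y + 1..y + 2, F x t`; the second term absorbs the shift. -/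
noncomputable def cocyclePotential (F : ℝ → ℝ → ℝ) (s : ℝ) : ℝ :=
  (∫ z in (1 : ℝ)..2, F s z) - ∫ t in (1 : ℝ)..s + 1, F t 1

theorem cocycle_eq_integral (hF : IsPosCocycle F)
    (hright : ∀ x a b, 0 < x → 0 < a → 0 < b → IntervalIntegrable (F x) volume a b)
    {x y : ℝ} (hx : 0 < x) (hy : 0 < y) :
    F x y = (∫ t in y + 1..y + 2, F x t) + (∫ z in (1 : ℝ)..2, F y z) -
      ∫ z in (1 : ℝ)..2, F (x + y) z := by
  have hshift : IntervalIntegrable (fun z => F x (y + z)) volume 1 2 := by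
    simpa using (hright x (y + 1) (y + 2) hx (by positivity) (by positivity)).comp_add_left y
  have hFy := hright y 1 2 hy one_pos two_pos
  calc F x y = ∫ _ in (1 : ℝ)..2, F x y := by norm_num
    _ = ∫ z in (1 : ℝ)..2, F x (y + z) + F y z - F (x + y) z := by
        refine intervalIntegral.integral_congr fun z hz => ?_
        rw [uIcc_of_le one_le_two] at hz
        exact eq_sub_of_add_eq' (hF hx hy (one_pos.trans_le hz.1))
    _ = _ := by
        rw [intervalIntegral.integral_sub (hshift.add hFy)
          (hright (x + y) 1 2 (by positivity) one_pos two_pos),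
          intervalIntegral.integral_add hshift hFy,
          intervalIntegral.integral_comp_add_left (F x) y]

theorem cocycle_integral_shift_sub (hF : IsPosCocycle F)
    (hright : ∀ x a b, 0 < x → 0 < a → 0 < b → IntervalIntegrable (F x) volume a b)
    (hleft : ∀ a b, 0 < a → 0 < b → IntervalIntegrable (F · 1) volume a b)
    {x y : ℝ} (hx : 0 < x) (hy : 0 < y) :
    (∫ t in y + 1..y + 2, F x t) - ∫ t in (1 : ℝ)..2, F x t =
      (∫ t in x + 1..x + y + 1, F t 1) - ∫ t in (1 : ℝ)..y + 1, F t 1 := by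
  have hx12 := hright x 1 2 hx one_pos two_pos
  have hx1y := hright x 1 (y + 1) hx one_pos (by positivity)
  have hxyy := hright x (y + 1) (y + 2) hx (by positivity) (by positivity)
  have hxy1 := hright x (y + 1) 1 hx (by positivity) one_pos
  have hright_shift : IntervalIntegrable (fun t => F x (t + 1)) volume 1 (y + 1) := by
    convert! (hright x 2 (y + 2) hx two_pos (by positivity)).comp_add_right 1 using 1 <;> ring
  have hleft_shift : IntervalIntegrable (fun t => F (x + t) 1) volume 1 (y + 1) := by
    convert! (hleft (x + 1) (x + y + 1) (by positivity) (by positivity)).comp_add_left x using 1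
      <;> ring
  calc (∫ t in y + 1..y + 2, F x t) - ∫ t in (1 : ℝ)..2, F x t
      = (∫ t in (1 : ℝ) + 1..y + 1 + 1, F x t) - ∫ t in (1 : ℝ)..y + 1, F x t := by
        rw [one_add_one_eq_two, add_assoc y, one_add_one_eq_two,
          intervalIntegral.integral_interval_sub_interval_comm' hxyy hx12 hxy1]
    _ = ∫ t in (1 : ℝ)..y + 1, F x (t + 1) - F x t := by
        rw [intervalIntegral.integral_sub hright_shift hx1y,
          intervalIntegral.integral_comp_add_right (F x)]
    _ = ∫ t in (1 : ℝ)..y + 1, F (x + t) 1 - F t 1 := by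
        refine intervalIntegral.integral_congr fun t ht => ?_
        rw [uIcc_of_le (by linarith)] at ht
        have := hF hx (one_pos.trans_le ht.1) one_pos
        linarith
    _ = _ := by
        rw [intervalIntegral.integral_sub hleft_shift (hleft _ _ one_pos (by positivity)),
          intervalIntegral.integral_comp_add_left (F · 1), ← add_assoc]

theorem cocycle_eq_potential_add_sub (hF : IsPosCocycle F)
    (hright : ∀ x a b, 0 < x → 0 < a → 0 < b → IntervalIntegrable (F x) volume a b)
    (hleft : ∀ a b, 0 < a → 0 < b → IntervalIntegrable (F · 1) volume a b)
    {x y : ℝ} (hx : 0 < x) (hy : 0 < y) :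
    F x y = cocyclePotential F x + cocyclePotential F y - cocyclePotential F (x + y) := by
  have hsplit := intervalIntegral.integral_add_adjacent_intervals
    (hleft 1 (x + 1) one_pos (by positivity))
    (hleft (x + 1) (x + y + 1) (by positivity) (by positivity))
  unfold cocyclePotential
  linarith [cocycle_eq_integral hF hright hx hy, cocycle_integral_shift_sub hF hright hleft hx hy]

end Cocycle

section FunctionalEquation

theorem map_mul_of_homogeneous_coboundary {g : ℝ → ℝ} (hg : ContinuousOn g (Ioi 0))
    (hhom : ∀ ⦃t x y⦄, 0 < t → 0 < x → 0 < y →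
      g (t * x) + g (t * y) - g (t * x + t * y) = t * (g x + g y - g (x + y)))
    {t x : ℝ} (ht : 0 < t) (hx : 0 < x) : g (t * x) = t * g x + x * (g t - t * g 1) := by
  have hadd : ∀ x y, 0 < x → 0 < y →
      g (t * (x + y)) - t * g (x + y) = g (t * x) - t * g x + (g (t * y) - t * g y) := by
    intro x y hx hy
    rw [mul_add]
    linarith [hhom ht hx hy]
  have hcont : ContinuousAt (fun x => g (t * x) - t * g x) 1 := by
    have hgt : ContinuousAt g (t * 1) := hg.continuousAt (Ioi_mem_nhds (by positivity))
    exact (ContinuousAt.comp hgt (by fun_prop)).sub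
      ((hg.continuousAt (Ioi_mem_nhds one_pos)).const_mul t)
  have hlin := eq_smul_of_additive_of_continuousAt hadd one_pos hcont hx
  rw [smul_eq_mul, mul_one] at hlin
  linarith

theorem exists_eq_mul_log_of_map_mul {g : ℝ → ℝ} (hg : ContinuousOn g (Ioi 0))
    (hmul : ∀ ⦃t x⦄, 0 < t → 0 < x → g (t * x) = t * g x + x * (g t - t * g 1)) :
    ∃ k, ∀ x, 0 < x → g x = x * (k * Real.log x + g 1) := by
  let l : ℝ →+ ℝ := AddMonoidHom.mk' (fun u => g (Real.exp u) / Real.exp u - g 1) fun u v => by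
    rw [Real.exp_add, hmul (Real.exp_pos u) (Real.exp_pos v)]
    field_simp
    ring
  have hl : Continuous l := ((hg.comp_continuous Real.continuous_exp Real.exp_pos).div
    Real.continuous_exp Real.exp_ne_zero).sub continuous_const
  refine ⟨l 1, fun x hx => ?_⟩
  have hlog : g x / x - g 1 = Real.log x * l 1 := by
    simpa [l, Real.exp_log hx] using map_real_smul l hl (Real.log x) 1
  field_simp at hlog
  linarith

end FunctionalEquation

/-- A symmetric cocycle on `(0, ∞)` that is positively homogeneous of degree `1`. It is determined
by its values `F r 1`. -/
structure IsHomogeneousCocycle (F : ℝ → ℝ → ℝ) : Prop where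
  cocycle : IsPosCocycle F
  symm : ∀ ⦃x y⦄, 0 < x → 0 < y → F x y = F y x
  map_mul : ∀ ⦃t x y⦄, 0 < t → 0 < x → 0 < y → F (t * x) (t * y) = t * F x y

namespace IsHomogeneousCocycle

variable {F : ℝ → ℝ → ℝ}

theorem eq_mul_div (hF : IsHomogeneousCocycle F) {x y : ℝ} (hx : 0 < x) (hy : 0 < y) :
    F x y = x * F (y / x) 1 := by
  rw [hF.symm hx hy, ← hF.map_mul hx (div_pos hy hx) one_pos, mul_div_cancel₀ _ hx.ne', mul_one]

theorem eq_affine_combination (hF : IsHomogeneousCocycle F) {r z : ℝ} (hr : 0 < r) (hz : 0 < z) :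
    F r 1 = r * F ((1 + z) / r) 1 + F z 1 - (r + 1) * F (z / (r + 1)) 1 := by
  rw [← hF.eq_mul_div hr (by positivity), ← hF.eq_mul_div (by positivity) hz, hF.symm hz one_pos]
  exact eq_sub_of_add_eq' (hF.cocycle hr one_pos hz)

theorem exists_bound_Icc (hF : IsHomogeneousCocycle F)
    (hmeas : AEMeasurable (F · 1) (volume.restrict (Ioi 0))) {a : ℝ} (ha : 0 < a) (b : ℝ) :
    ∃ C, ∀ r ∈ Icc a b, ‖F r 1‖ ≤ C := by
  rcases lt_or_ge b a with hab | hab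
  · exact ⟨0, fun r hr => (hab.not_ge (hr.1.trans hr.2)).elim⟩
  have hb : 0 < b := ha.trans_le hab
  have hmeasM : AEMeasurable (F · 1) (volume.restrict (Ioo 0 (max (3 / a) 2))) :=
    hmeas.mono_measure (Measure.restrict_mono_set volume Ioo_subset_Ioi_self)
  obtain ⟨N, _, hbad⟩ := exists_measure_lt_norm_lt hmeasM
    (ENNReal.ofReal_pos.2 (by positivity : 0 < (2 * b + 2)⁻¹))
  set B := {w | N < ‖F w 1‖} ∩ Ioo 0 (max (3 / a) 2)
  refine ⟨b * N + N + (b + 1) * N, fun r ⟨har, hrb⟩ => ?_⟩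
  have hr : 0 < r := ha.trans_le har
  have hB : volume B < ENNReal.ofReal (2 * r + 2)⁻¹ :=
    ((Measure.le_restrict_apply _ _).trans_lt hbad).trans_le (by gcongr)
  obtain ⟨z, ⟨hz1, hz2⟩, hzB₁, hzB₂, hzB₃⟩ := exists_mem_Ioo_one_two_notMem hr hB
  have hz : 0 < z := one_pos.trans hz1
  have le_of_notMem : ∀ {w}, 0 < w → w < max (3 / a) 2 → w ∉ B → ‖F w 1‖ ≤ N :=
    fun hw0 hw hwB => not_lt.1 fun h => hwB ⟨h, hw0, hw⟩
  have h₁ : ‖F ((1 + z) / r) 1‖ ≤ N := le_of_notMem (by positivity)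
    (lt_max_of_lt_left (div_lt_div₀ (by linarith) har (by norm_num) ha)) hzB₁
  have h₂ : ‖F z 1‖ ≤ N := le_of_notMem hz (lt_max_of_lt_right hz2) hzB₂
  have h₃ : ‖F (z / (r + 1)) 1‖ ≤ N := le_of_notMem (by positivity)
    (lt_max_of_lt_right ((div_lt_self hz (by linarith)).trans hz2)) hzB₃
  calc ‖F r 1‖ = ‖r * F ((1 + z) / r) 1 + F z 1 - (r + 1) * F (z / (r + 1)) 1‖ := by
        rw [← hF.eq_affine_combination hr hz]
    _ ≤ ‖r * F ((1 + z) / r) 1‖ + ‖F z 1‖ + ‖(r + 1) * F (z / (r + 1)) 1‖ :=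
        (norm_sub_le _ _).trans (by gcongr; exact norm_add_le _ _)
    _ = r * ‖F ((1 + z) / r) 1‖ + ‖F z 1‖ + (r + 1) * ‖F (z / (r + 1)) 1‖ := by
        rw [norm_mul, norm_mul, Real.norm_of_nonneg hr.le,
          Real.norm_of_nonneg (by positivity : 0 ≤ r + 1)]
    _ ≤ b * N + N + (b + 1) * N := by gcongr

theorem intervalIntegrable_left (hF : IsHomogeneousCocycle F)
    (hmeas : AEMeasurable (F · 1) (volume.restrict (Ioi 0))) {a b : ℝ} (ha : 0 < a) (hb : 0 < b) :
    IntervalIntegrable (F · 1) volume a b := by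
  have hsub : uIoc a b ⊆ Ioi 0 := fun t ht => (lt_min ha hb).trans ht.1
  obtain ⟨C, hC⟩ := hF.exists_bound_Icc hmeas (lt_min ha hb) (max a b)
  rw [intervalIntegrable_iff]
  refine IntegrableOn.of_bound (by simp)
    (hmeas.mono_measure (Measure.restrict_mono_set volume hsub)).aestronglyMeasurable C ?_
  filter_upwards [ae_restrict_mem measurableSet_uIoc] with t ht
  exact hC t (uIoc_subset_uIcc ht)

theorem intervalIntegrable_right (hF : IsHomogeneousCocycle F)
    (hmeas : AEMeasurable (F · 1) (volume.restrict (Ioi 0))) {x a b : ℝ} (hx : 0 < x) (ha : 0 < a)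
    (hb : 0 < b) : IntervalIntegrable (F x) volume a b := by
  have hscaled : IntervalIntegrable (fun y => x * F (x⁻¹ * y) 1) volume a b := by
    simpa [hx.ne'] using ((hF.intervalIntegrable_left hmeas (div_pos ha hx)
      (div_pos hb hx)).comp_mul_left (c := x⁻¹)).const_mul x
  refine hscaled.congr fun y hy => ?_
  rw [hF.eq_mul_div hx ((lt_min ha hb).trans hy.1), inv_mul_eq_div]

theorem cocyclePotential_eq (hF : IsHomogeneousCocycle F) {s : ℝ} (hs : 0 < s) :
    cocyclePotential F s =
      s ^ 2 * (∫ r in 1 / s..2 / s, F r 1) - ∫ t in (1 : ℝ)..s + 1, F t 1 := by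
  have hint : ∫ z in (1 : ℝ)..2, F s z = ∫ z in (1 : ℝ)..2, s * F (z / s) 1 :=
    intervalIntegral.integral_congr fun z hz => hF.eq_mul_div hs (by
      rw [uIcc_of_le one_le_two] at hz; exact one_pos.trans_le hz.1)
  rw [cocyclePotential, hint, intervalIntegral.integral_const_mul,
    intervalIntegral.integral_comp_div (F · 1) hs.ne', smul_eq_mul, ← mul_assoc, sq]

theorem continuousOn_cocyclePotential (hF : IsHomogeneousCocycle F)
    (hmeas : AEMeasurable (F · 1) (volume.restrict (Ioi 0))) :
    ContinuousOn (cocyclePotential F) (Ioi 0) := by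
  have hint : ∀ a ∈ Ioi (0 : ℝ), ∀ b ∈ Ioi (0 : ℝ), IntervalIntegrable (F · 1) volume a b :=
    fun a ha b hb => hF.intervalIntegrable_left hmeas ha hb
  have hprim : ContinuousOn (fun s => ∫ t in (1 : ℝ)..s, F t 1) (Ioi 0) :=
    continuousOn_integral_of_isOpen isOpen_Ioi hint (mem_Ioi.2 one_pos)
  have hdiv : ∀ c : ℝ, 0 < c → ContinuousOn (fun s => ∫ t in (1 : ℝ)..c / s, F t 1) (Ioi 0) :=
    fun c hc => hprim.comp (continuousOn_const.div continuousOn_id fun s hs => ne_of_gt hs)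
      fun s hs => div_pos hc hs
  have hadd : ContinuousOn (fun s => ∫ t in (1 : ℝ)..s + 1, F t 1) (Ioi 0) :=
    hprim.comp (by fun_prop) fun s hs => mem_Ioi.2 (add_pos hs one_pos)
  refine (((continuousOn_pow 2).mul ((hdiv 2 two_pos).sub (hdiv 1 one_pos))).sub hadd).congr
    fun s hs => ?_
  have h1s : 1 / s ∈ Ioi (0 : ℝ) := mem_Ioi.2 (div_pos one_pos hs)
  have h2s : 2 / s ∈ Ioi (0 : ℝ) := mem_Ioi.2 (div_pos two_pos hs)
  rw [hF.cocyclePotential_eq hs, ← intervalIntegral.integral_interval_sub_left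
    (hint 1 (mem_Ioi.2 one_pos) _ h2s) (hint 1 (mem_Ioi.2 one_pos) _ h1s)]
  rfl

theorem exists_eq_mul_log (hF : IsHomogeneousCocycle F)
    (hmeas : AEMeasurable (F · 1) (volume.restrict (Ioi 0))) :
    ∃ k, ∀ x y, 0 < x → 0 < y →
      F x y = k * (x * Real.log x + y * Real.log y - (x + y) * Real.log (x + y)) := by
  have hFg : ∀ ⦃x y⦄, 0 < x → 0 < y →
      F x y = cocyclePotential F x + cocyclePotential F y - cocyclePotential F (x + y) :=
    fun x y => cocycle_eq_potential_add_sub hF.cocycle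
      (fun _ _ _ => hF.intervalIntegrable_right hmeas) fun _ _ => hF.intervalIntegrable_left hmeas
  have hg := hF.continuousOn_cocyclePotential hmeas
  have hhom : ∀ ⦃t x y⦄, 0 < t → 0 < x → 0 < y →
      cocyclePotential F (t * x) + cocyclePotential F (t * y) - cocyclePotential F (t * x + t * y) =
        t * (cocyclePotential F x + cocyclePotential F y - cocyclePotential F (x + y)) :=
    fun t x y ht hx hy => by
      rw [← hFg hx hy, ← hFg (mul_pos ht hx) (mul_pos ht hy), hF.map_mul ht hx hy]
  obtain ⟨k, hk⟩ := exists_eq_mul_log_of_map_mul hg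
    fun _ _ => map_mul_of_homogeneous_coboundary hg hhom
  refine ⟨k, fun x y hx hy => ?_⟩
  rw [hFg hx hy, hk x hx, hk y hy, hk (x + y) (by positivity)]
  ring

end IsHomogeneousCocycle

/-- Minus the Shannon entropy of the weights `x, y, z`, extended to unnormalized weights by
homogeneity. `Real.log 0 = 0` supplies the convention `0 * log 0 = 0`. -/
noncomputable def shannonForm (x y z : ℝ) : ℝ :=
  x * Real.log x + y * Real.log y + z * Real.log z - (x + y + z) * Real.log (x + y + z)

theorem shannonForm_perm (v : Fin 3 → ℝ) (σ : Equiv.Perm (Fin 3)) :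
    shannonForm (v (σ 0)) (v (σ 1)) (v (σ 2)) = shannonForm (v 0) (v 1) (v 2) := by
  have hsum := Equiv.sum_comp σ v
  have hlog := Equiv.sum_comp σ fun i => v i * Real.log (v i)
  simp only [Fin.sum_univ_three] at hsum hlog
  simp only [shannonForm, hsum, hlog]

theorem shannonForm_mul {t : ℝ} (ht : t ≠ 0) (x y z : ℝ) :
    shannonForm (t * x) (t * y) (t * z) = t * shannonForm x y z := by
  have hlog : ∀ u, t * u * Real.log (t * u) = t * u * Real.log t + t * (u * Real.log u) := by
    intro u
    rcases eq_or_ne u 0 with rfl | hu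
    · simp
    · rw [Real.log_mul ht hu]
      ring
  simp only [shannonForm, ← mul_add, hlog]
  ring

theorem shannonForm_branching (x y z : ℝ) :
    shannonForm x y z = shannonForm (x + y) z 0 + shannonForm x y 0 := by
  simp only [shannonForm, Real.log_zero, mul_zero, add_zero]
  ring

/-- The solutions of the entropy equation on the domain `x, y, z ≥ 0`, `x + y + z > 0`: symmetric,
positively homogeneous functions with the branching property. `H` is total, and nothing is asked of
its values outside the domain; `0 < x + y` keeps the argument `(x, y, 0)` of the branching equation
inside it. -/
structure IsEntropySolution (H : ℝ → ℝ → ℝ → ℝ) : Prop where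
  symm : ∀ x y z : ℝ, 0 ≤ x → 0 ≤ y → 0 ≤ z → 0 < x + y + z → ∀ σ : Equiv.Perm (Fin 3),
    H x y z = H (![x, y, z] (σ 0)) (![x, y, z] (σ 1)) (![x, y, z] (σ 2))
  map_mul : ∀ t : ℝ, 0 < t → ∀ x y z : ℝ, 0 ≤ x → 0 ≤ y → 0 ≤ z → 0 < x + y + z →
    H (t * x) (t * y) (t * z) = t * H x y z
  branching : ∀ x y z : ℝ, 0 ≤ x → 0 ≤ y → 0 ≤ z → 0 < x + y + z → 0 < x + y →
    H x y z = H (x + y) z 0 + H x y 0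

namespace IsEntropySolution

variable {H : ℝ → ℝ → ℝ → ℝ}

theorem swap_zero (hH : IsEntropySolution H) {x y : ℝ} (hx : 0 ≤ x) (hy : 0 ≤ y)
    (hxy : 0 < x + y) : H x y 0 = H y x 0 := by
  simpa [Equiv.swap_apply_of_ne_of_ne] using
    hH.symm x y 0 hx hy le_rfl (by simpa using hxy) (Equiv.swap 0 1)

theorem rotate (hH : IsEntropySolution H) {x y z : ℝ} (hx : 0 ≤ x) (hy : 0 ≤ y) (hz : 0 ≤ z)
    (hxyz : 0 < x + y + z) : H x y z = H y z x := by
  simpa using hH.symm x y z hx hy hz hxyz (finRotate 3)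

theorem zero_zero (hH : IsEntropySolution H) {x : ℝ} (hx : 0 < x) : H x 0 0 = 0 := by
  simpa [hx] using hH.branching x 0 0 hx.le le_rfl le_rfl

theorem isHomogeneousCocycle (hH : IsEntropySolution H) :
    IsHomogeneousCocycle fun x y => H x y 0 where
  cocycle x y z hx hy hz := by
    have hyz : 0 < y + z := add_pos hy hz
    calc H (x + y) z 0 + H x y 0 = H x y z :=
          (hH.branching x y z hx.le hy.le hz.le (by positivity) (by positivity)).symm
      _ = H y z x := hH.rotate hx.le hy.le hz.le (by positivity)
      _ = H (y + z) x 0 + H y z 0 := hH.branching y z x hy.le hz.le hx.le (by positivity) hyz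
      _ = H x (y + z) 0 + H y z 0 := by rw [hH.swap_zero hyz.le hx.le (by positivity)]
  symm x y hx hy := hH.swap_zero hx.le hy.le (add_pos hx hy)
  map_mul t x y ht hx hy := by
    simpa using hH.map_mul t ht x y 0 hx.le hy.le le_rfl (by positivity)

theorem aemeasurable_one_zero (hH : IsEntropySolution H)
    (hmeas : AEMeasurable (fun x => H (1 - x) x 0) (volume.restrict (Ioo 0 1))) :
    AEMeasurable (fun r => H r 1 0) (volume.restrict (Ioi 0)) := by
  have hqmp : Measure.QuasiMeasurePreserving (fun r : ℝ => (r + 1)⁻¹)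
      (volume.restrict (Ioi 0)) (volume.restrict (Ioo 0 1)) := by
    refine quasiMeasurePreserving_restrict_of_leftInvOn (ψ := fun w => w⁻¹ - 1) measurableSet_Ioi
      (by fun_prop) (fun r (hr : 0 < r) => ?_) ?_ (fun r _ => by simp)
    · exact ⟨by positivity, inv_lt_one_of_one_lt₀ (by linarith)⟩
    · exact (differentiableOn_inv.mono fun w hw => ne_of_gt hw.1).sub_const 1
  have hcomp : AEMeasurable (fun r : ℝ => (r + 1) * H (1 - (r + 1)⁻¹) (r + 1)⁻¹ 0)
      (volume.restrict (Ioi 0)) :=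
    AEMeasurable.mul (by fun_prop) (hmeas.comp_quasiMeasurePreserving hqmp)
  refine hcomp.congr ?_
  filter_upwards [ae_restrict_mem measurableSet_Ioi] with r (hr : 0 < r)
  have hr1 : 0 < r + 1 := by positivity
  have hinv : (r + 1)⁻¹ ≤ 1 := inv_le_one_of_one_le₀ (by linarith)
  rw [← hH.map_mul _ hr1 _ _ _ (sub_nonneg.2 hinv) (by positivity) le_rfl (by simp), mul_sub,
    mul_inv_cancel₀ hr1.ne', mul_one, mul_zero, add_sub_cancel_right]

theorem exists_eq_mul_shannonForm_zero (hH : IsEntropySolution H)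
    (hmeas : AEMeasurable (fun x => H (1 - x) x 0) (volume.restrict (Ioo 0 1))) :
    ∃ k, ∀ x y, 0 ≤ x → 0 ≤ y → 0 < x + y → H x y 0 = k * shannonForm x y 0 := by
  obtain ⟨k, hk⟩ := hH.isHomogeneousCocycle.exists_eq_mul_log (hH.aemeasurable_one_zero hmeas)
  refine ⟨k, fun x y hx hy hxy => ?_⟩
  rcases hx.eq_or_lt with rfl | hx
  · rw [hH.swap_zero le_rfl hy hxy, hH.zero_zero (by simpa using hxy)]
    simp [shannonForm]
  rcases hy.eq_or_lt with rfl | hy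
  · simp [hH.zero_zero hx, shannonForm]
  · simp [hk x y hx hy, shannonForm]

theorem exists_eq_mul_shannonForm (hH : IsEntropySolution H)
    (hmeas : AEMeasurable (fun x => H (1 - x) x 0) (volume.restrict (Ioo 0 1))) :
    ∃ k, ∀ x y z, 0 ≤ x → 0 ≤ y → 0 ≤ z → 0 < x + y + z → H x y z = k * shannonForm x y z := by
  obtain ⟨k, hk⟩ := hH.exists_eq_mul_shannonForm_zero hmeas
  have hpos : ∀ x y z, 0 ≤ x → 0 ≤ y → 0 ≤ z → 0 < x + y + z → 0 < x + y →
      H x y z = k * shannonForm x y z := fun x y z hx hy hz hxyz hxy => by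
    rw [hH.branching x y z hx hy hz hxyz hxy, hk _ z hxy.le hz hxyz, hk x y hx hy hxy,
      shannonForm_branching x y z, mul_add]
  refine ⟨k, fun x y z hx hy hz hxyz => ?_⟩
  rcases (add_nonneg hx hy).eq_or_lt with hxy | hxy
  · obtain ⟨rfl, rfl⟩ := (add_eq_zero_iff_of_nonneg hx hy).1 hxy.symm
    have hz' : 0 < z := by simpa using hxyz
    rw [hH.rotate le_rfl le_rfl hz hxyz, hpos 0 z 0 le_rfl hz le_rfl (by simpa) (by simpa)]
    simp [shannonForm]
  · exact hpos x y z hx hy hz hxyz hxy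

end IsEntropySolution

section Converse

variable {H : ℝ → ℝ → ℝ → ℝ} {k : ℝ}

theorem isEntropySolution_of_eq_mul_shannonForm
    (hH : ∀ x y z, 0 ≤ x → 0 ≤ y → 0 ≤ z → 0 < x + y + z → H x y z = k * shannonForm x y z) :
    IsEntropySolution H where
  symm x y z hx hy hz hxyz σ := by
    have hnonneg : ∀ i, 0 ≤ ![x, y, z] i := by simp [Fin.forall_fin_succ, hx, hy, hz]
    have hsum : ![x, y, z] (σ 0) + ![x, y, z] (σ 1) + ![x, y, z] (σ 2) = x + y + z := by
      simpa [Fin.sum_univ_three] using Equiv.sum_comp σ ![x, y, z]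
    rw [hH x y z hx hy hz hxyz, hH _ _ _ (hnonneg _) (hnonneg _) (hnonneg _) (hsum ▸ hxyz),
      shannonForm_perm]
    rfl
  map_mul t ht x y z hx hy hz hxyz := by
    rw [hH _ _ _ (by positivity) (by positivity) (by positivity)
      (by simpa only [mul_add] using mul_pos ht hxyz), hH x y z hx hy hz hxyz,
      shannonForm_mul ht.ne', mul_left_comm]
  branching x y z hx hy hz hxyz hxy := by
    rw [hH x y z hx hy hz hxyz, hH _ z 0 hxy.le hz le_rfl (by simpa),
      hH x y 0 hx hy le_rfl (by simpa), shannonForm_branching, mul_add]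

theorem measurable_of_eq_mul_shannonForm
    (hH : ∀ x y z, 0 ≤ x → 0 ≤ y → 0 ≤ z → 0 < x + y + z → H x y z = k * shannonForm x y z) :
    Measurable fun x : Ioo (0 : ℝ) 1 => H (1 - x) x 0 := by
  have heq : (fun x : Ioo (0 : ℝ) 1 => H (1 - x) x 0) =
      fun x : Ioo (0 : ℝ) 1 => k * shannonForm (1 - x) x 0 :=
    funext fun x => hH _ _ _ (sub_nonneg.2 x.2.2.le) x.2.1.le le_rfl (by simp)
  rw [heq]
  unfold shannonForm
  fun_prop

end Converse

/-- `AEMeasurable` expresses Lebesgue measurability, while `Measurable` on the subtype `Ioo 0 1` is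
Borel measurability. -/
theorem aczel_entropy_characterization_general (H : ℝ → ℝ → ℝ → ℝ) :
    (IsEntropySolution H ∧
      AEMeasurable (fun x => H (1 - x) x 0) (volume.restrict (Ioo (0 : ℝ) 1))) ↔
    ∃ k, ∀ x y z, 0 ≤ x → 0 ≤ y → 0 ≤ z → 0 < x + y + z → H x y z = k * shannonForm x y z :=
  ⟨fun ⟨hH, hmeas⟩ => hH.exists_eq_mul_shannonForm hmeas,
   fun ⟨_, hk⟩ => ⟨isEntropySolution_of_eq_mul_shannonForm hk,
    aemeasurable_restrict_of_measurable_subtype measurableSet_Ioo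
      (measurable_of_eq_mul_shannonForm hk)⟩⟩

/-- Aczél's theorem: a function `H` on
`D = {(x,y,z) : x ≥ 0, y ≥ 0, z ≥ 0, x+y+z > 0}` is symmetric, positively
homogeneous of degree 1, satisfies `H(x,y,z) = H(x+y,z,0) + H(x,y,0)` on `D`
(wherever all arguments lie in `D`, i.e. when moreover `x + y > 0`), and
`x ↦ H(1−x, x, 0)` is Lebesgue measurable on `(0,1)`, if and only if
`H(x,y,z) = k·[x·ln x + y·ln y + z·ln z − (x+y+z)·ln(x+y+z)]` on `D` for some
constant `k` (with the convention `0·ln 0 = 0`, automatic since `Real.log 0 = 0`). -/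
theorem aczel_entropy_characterization (H : ℝ → ℝ → ℝ → ℝ) :
    ((∀ x y z : ℝ, 0 ≤ x → 0 ≤ y → 0 ≤ z → 0 < x + y + z →
        ∀ σ : Equiv.Perm (Fin 3),
          H x y z = H (![x, y, z] (σ 0)) (![x, y, z] (σ 1)) (![x, y, z] (σ 2))) ∧
      (∀ t : ℝ, 0 < t → ∀ x y z : ℝ, 0 ≤ x → 0 ≤ y → 0 ≤ z → 0 < x + y + z →
        H (t * x) (t * y) (t * z) = t * H x y z) ∧
      (∀ x y z : ℝ, 0 ≤ x → 0 ≤ y → 0 ≤ z → 0 < x + y + z → 0 < x + y →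
        H x y z = H (x + y) z 0 + H x y 0) ∧
      Measurable ((Set.Ioo (0 : ℝ) 1).restrict fun x => H (1 - x) x 0)) ↔
    (∃ k : ℝ, ∀ x y z : ℝ, 0 ≤ x → 0 ≤ y → 0 ≤ z → 0 < x + y + z →
      H x y z = k * (x * Real.log x + y * Real.log y + z * Real.log z -
        (x + y + z) * Real.log (x + y + z))) := by
  refine ⟨fun ⟨hsymm, hmul, hbranch, hmeas⟩ => (aczel_entropy_characterization_general H).1
    ⟨⟨hsymm, hmul, hbranch⟩, aemeasurable_restrict_of_measurable_subtype measurableSet_Ioo hmeas⟩,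
    fun ⟨_, hk⟩ => ?_⟩
  obtain ⟨hsymm, hmul, hbranch⟩ := isEntropySolution_of_eq_mul_shannonForm hk
  exact ⟨hsymm, hmul, hbranch, measurable_of_eq_mul_shannonForm hk⟩
end

section
/- Let S be a commutative semigroup (written additively), let ε ≥ 0, and let F : S × S → ℝ be a function such that |F(x,y) + F(x+y,z) − F(x,y+z) − F(y,z)| ≤ ε for all x,y,z ∈ S. Then there exists a function Ψ : S × S → ℝ satisfying the cocycle equation Ψ(x,y) + Ψ(x+y,z) = Ψ(x,y+z) + Ψ(y,z) for all x,y,z ∈ S, such that |F(x,y) − Ψ(x,y)| ≤ ε for all x,y ∈ S. -/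
/-!
For a function `F` of two variables, the defect
`C x y z = F x y + F (x + y) z - F x (y + z) - F y z` satisfies the next cocycle identity
`C y z w + C x (y + z) w + C x y z = C (x + y) z w + C x y (z + w)`. If `C` is bounded by `ε` and
`m` is a left-invariant mean, applying `m` in the variable `w` exhibits `C` as the defect of
`(x, y) ↦ m (C x y)`, a function bounded by `ε`; subtracting it from `F` leaves a cocycle.

On a commutative semigroup an invariant mean is a common fixed point of the commuting translations
acting on the weak-* compact convex set of means, so it exists by the Markov–Kakutani theorem.
-/

open Filter Function Set Topology
open scoped BoundedContinuousFunction Pointwise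

section AffineDynamics

variable {𝕜 E : Type*} [Field 𝕜] [AddCommGroup E] [Module 𝕜 E]

lemma affineMap_birkhoffAverage_id (T : E →ᵃ[𝕜] E) {n : ℕ} (hn : (n : 𝕜) ≠ 0) (x : E) :
    T (birkhoffAverage 𝕜 T id n x) = birkhoffAverage 𝕜 T id n (T x) := by
  have hdecomp : T.linear + const E (T 0) = T := T.decomp.symm
  have hconst : birkhoffAverage 𝕜 T (const E (T 0)) n x = T 0 :=
    congr_fun (birkhoffAverage_of_comp_eq 𝕜 rfl hn) x
  calc T (birkhoffAverage 𝕜 T id n x)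
      = T.linear (birkhoffAverage 𝕜 T id n x) + T 0 := congr_fun T.decomp _
    _ = birkhoffAverage 𝕜 T T.linear n x + birkhoffAverage 𝕜 T (const E (T 0)) n x := by
        rw [map_birkhoffAverage 𝕜 𝕜, comp_id, hconst]
    _ = birkhoffAverage 𝕜 T T n x := by
        rw [← Pi.add_apply, ← Pi.add_apply, ← birkhoffAverage_add, hdecomp]
    _ = birkhoffAverage 𝕜 T id n (T x) := by
        simp only [birkhoffAverage, birkhoffSum, id, ← iterate_succ_apply, iterate_succ_apply']

variable [LinearOrder 𝕜]

lemma convex_fixedPoints (T : E →ᵃ[𝕜] E) : Convex 𝕜 (fixedPoints T) := by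
  intro x hx y hy a b _ _ hab
  rw [mem_fixedPoints, IsFixedPt, Convex.combo_affine_apply hab, hx, hy]

lemma birkhoffAverage_id_mem_of_convex [IsStrictOrderedRing 𝕜] {K : Set E} (hconv : Convex 𝕜 K)
    {T : E → E} (hT : MapsTo T K K) {x : E} (hx : x ∈ K) {n : ℕ} (hn : n ≠ 0) :
    birkhoffAverage 𝕜 T id n x ∈ K := by
  rw [birkhoffAverage, birkhoffSum, Finset.smul_sum]
  exact hconv.sum_mem (fun _ _ ↦ by positivity) (by simp [hn]) fun k _ ↦ hT.iterate k hx

end AffineDynamics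

section MarkovKakutani

variable {E : Type*} [AddCommGroup E] [Module ℝ E] [TopologicalSpace E] [IsTopologicalAddGroup E]
  [ContinuousSMul ℝ E] {K : Set E}

lemma tendsto_map_birkhoffAverage_sub_birkhoffAverage (hK : IsCompact K) {T : E →ᴬ[ℝ] E}
    (hT : MapsTo T K K) {x : E} (hx : x ∈ K) :
    Tendsto (fun n ↦ T (birkhoffAverage ℝ T id n x) - birkhoffAverage ℝ T id n x)
      atTop (𝓝 0) := by
  have hbounded : Bornology.IsVonNBounded ℝ (K - K) := (hK.isVonNBounded ℝ).sub (hK.isVonNBounded ℝ)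
  have hzero : Tendsto (fun n : ℕ ↦ (n : ℝ)⁻¹ • (T^[n] x - x)) atTop (𝓝 0) :=
    hbounded.smul_tendsto_zero (.of_forall fun n ↦ sub_mem_sub (hT.iterate n hx) hx)
      tendsto_inv_atTop_nhds_zero_nat
  refine hzero.congr' ?_
  filter_upwards [eventually_ne_atTop 0] with n hn
  have hmap : T (birkhoffAverage ℝ T id n x) = birkhoffAverage ℝ T id n (T x) :=
    affineMap_birkhoffAverage_id T.toAffineMap (Nat.cast_ne_zero.mpr hn) x
  rw [hmap, birkhoffAverage_apply_sub_birkhoffAverage, id, id]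

variable [T2Space E]

lemma exists_isFixedPt_of_isCompact_convex (hK : IsCompact K) (hconv : Convex ℝ K)
    (hne : K.Nonempty) {T : E →ᴬ[ℝ] E} (hT : MapsTo T K K) : ∃ x ∈ K, IsFixedPt T x := by
  obtain ⟨x₀, hx₀⟩ := hne
  have hmem : ∀ᶠ n in hyperfilter ℕ, birkhoffAverage ℝ T id n x₀ ∈ K :=
    Nat.hyperfilter_le_atTop <| (eventually_ne_atTop 0).mono fun _ hn ↦
      birkhoffAverage_id_mem_of_convex hconv hT hx₀ hn
  obtain ⟨x, hxK, hlim⟩ : ∃ x ∈ K,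
      Tendsto (fun n ↦ birkhoffAverage ℝ T id n x₀) (hyperfilter ℕ) (𝓝 x) :=
    hK.ultrafilter_le_nhds' ((hyperfilter ℕ).map fun n ↦ birkhoffAverage ℝ T id n x₀) hmem
  have hdiff := ((T.continuous.tendsto x).comp hlim).sub hlim
  have hzero := (tendsto_map_birkhoffAverage_sub_birkhoffAverage hK hT hx₀).mono_left
    Nat.hyperfilter_le_atTop
  exact ⟨x, hxK, sub_eq_zero.mp (tendsto_nhds_unique hdiff hzero)⟩

variable {ι : Type*} {T : ι → E →ᴬ[ℝ] E}

lemma nonempty_inter_biInter_fixedPoints_of_commute (hK : IsCompact K) (hconv : Convex ℝ K)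
    (hne : K.Nonempty) (hT : ∀ i, MapsTo (T i) K K)
    (hcomm : ∀ i j, Function.Commute (T i) (T j)) (s : Finset ι) :
    (K ∩ ⋂ i ∈ s, fixedPoints (T i)).Nonempty := by
  classical
  induction s using Finset.induction_on with
  | empty => simpa using hne
  | insert j s _ ih =>
    have hcompact : IsCompact (K ∩ ⋂ i ∈ s, fixedPoints (T i)) :=
      hK.inter_right <| isClosed_biInter fun i _ ↦ isClosed_fixedPoints (T i).continuous
    have hconvex : Convex ℝ (K ∩ ⋂ i ∈ s, fixedPoints (T i)) :=
      hconv.inter <| convex_iInter₂ fun i _ ↦ convex_fixedPoints (T i).toAffineMap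
    have hmaps : MapsTo (T j) (K ∩ ⋂ i ∈ s, fixedPoints (T i)) (K ∩ ⋂ i ∈ s, fixedPoints (T i)) :=
      (hT j).inter_inter <| mapsTo_iInter₂_iInter₂ fun i _ _ hx ↦ IsFixedPt.map hx (hcomm j i)
    obtain ⟨x, ⟨hxK, hxs⟩, hxj⟩ := exists_isFixedPt_of_isCompact_convex hcompact hconvex ih hmaps
    exact ⟨x, hxK, by simpa using ⟨hxj, by simpa using hxs⟩⟩

theorem exists_forall_isFixedPt_of_commute (hK : IsCompact K) (hconv : Convex ℝ K)
    (hne : K.Nonempty) (hT : ∀ i, MapsTo (T i) K K)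
    (hcomm : ∀ i j, Function.Commute (T i) (T j)) : ∃ x ∈ K, ∀ i, IsFixedPt (T i) x := by
  obtain ⟨x, hxK, hx⟩ := hK.inter_iInter_nonempty (fun i ↦ fixedPoints (T i))
    (fun i ↦ isClosed_fixedPoints (T i).continuous)
    (nonempty_inter_biInter_fixedPoints_of_commute hK hconv hne hT hcomm)
  exact ⟨x, hxK, fun i ↦ mem_iInter.mp hx i⟩

end MarkovKakutani

section Means

variable {X Y : Type*} [TopologicalSpace X] [TopologicalSpace Y]

variable (X) in
/-- The means on `X`, as a subset of the weak-* dual of the bounded continuous functions. They are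
encoded as the functionals of norm at most `1` sending `1` to `1`, which is equivalent to being
positive and normalized. -/
def means : Set (WeakDual ℝ (X →ᵇ ℝ)) :=
  {m | (∀ f, |m f| ≤ ‖f‖) ∧ m 1 = 1}

lemma isCompact_means : IsCompact (means X) := by
  have hclosed : IsClosed (means X) := by
    simp only [means, ofPred_and, ofPred_forall]
    exact (isClosed_iInter fun f ↦ isClosed_le (WeakDual.eval_continuous f).abs continuous_const)
      |>.inter (isClosed_eq (WeakDual.eval_continuous 1) continuous_const)
  refine (WeakDual.isCompact_closedBall 0 1).of_isClosed_subset hclosed fun m hm ↦ ?_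
  exact mem_closedBall_zero_iff.mpr <|
    (WeakDual.toStrongDual m).opNorm_le_bound zero_le_one fun f ↦ by simpa using hm.1 f

lemma convex_means : Convex ℝ (means X) := fun _ hm _ hm' _ _ ha hb hab ↦
  ⟨fun f ↦ abs_le.mpr <| convex_Icc _ _ (abs_le.mp (hm.1 f)) (abs_le.mp (hm'.1 f)) ha hb hab,
    convex_singleton (1 : ℝ) hm.2 hm'.2 ha hb hab⟩

lemma eval_mem_means (x : X) :
    StrongDual.toWeakDual (BoundedContinuousFunction.evalCLM ℝ x) ∈ means X :=
  ⟨fun f ↦ f.norm_coe_le_norm x, rfl⟩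

lemma map_const_of_mem_means {m : WeakDual ℝ (X →ᵇ ℝ)} (hm : m ∈ means X) (c : ℝ) :
    m (.const X c) = c := by
  have hc : BoundedContinuousFunction.const X c = c • 1 := by ext; simp
  rw [hc, map_smul, hm.2, smul_eq_mul, mul_one]

/-- The pushforward along `g` of functionals on bounded continuous functions: the analogue for means
of the pushforward of measures. This weak-* continuous linear map is bundled as an affine map, the
form in which the fixed point theorem applies to it. -/
noncomputable def functionalPushforward (g : C(X, Y)) :
    WeakDual ℝ (X →ᵇ ℝ) →ᴬ[ℝ] WeakDual ℝ (Y →ᵇ ℝ) where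
  __ := LinearMap.toAffineMap
    { toFun m := StrongDual.toWeakDual
        (WeakDual.toStrongDual m ∘L BoundedContinuousFunction.compContinuousCLM ℝ ℝ g)
      map_add' _ _ := rfl
      map_smul' _ _ := rfl }
  cont := WeakDual.continuous_of_continuous_eval fun f ↦
    WeakDual.eval_continuous (f.compContinuous g)

lemma functionalPushforward_apply (g : C(X, Y)) (m : WeakDual ℝ (X →ᵇ ℝ)) (f : Y →ᵇ ℝ) :
    functionalPushforward g m f = m (f.compContinuous g) :=
  rfl

lemma mapsTo_functionalPushforward_means (g : C(X, Y)) :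
    MapsTo (functionalPushforward g) (means X) (means Y) :=
  fun _ hm ↦ ⟨fun f ↦ (hm.1 _).trans (f.norm_compContinuous_le g), hm.2⟩

lemma commute_functionalPushforward {g h : C(X, X)} (hgh : Function.Commute g h) :
    Function.Commute (functionalPushforward g) (functionalPushforward h) := fun m ↦ by
  refine DFunLike.ext _ _ fun f ↦ ?_
  simp only [functionalPushforward_apply]
  congr 1
  ext x
  exact congr_arg f (hgh x)

theorem exists_mem_means_forall_map_compContinuous_eq [Nonempty X] {ι : Type*} {g : ι → C(X, X)}
    (hg : ∀ i j, Function.Commute (g i) (g j)) :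
    ∃ m ∈ means X, ∀ i (f : X →ᵇ ℝ), m (f.compContinuous (g i)) = m f := by
  obtain ⟨m, hm, hfixed⟩ := exists_forall_isFixedPt_of_commute
    (T := fun i ↦ functionalPushforward (g i)) isCompact_means convex_means
    ⟨_, eval_mem_means (Classical.arbitrary X)⟩
    (fun i ↦ mapsTo_functionalPushforward_means (g i))
    (fun i j ↦ commute_functionalPushforward (hg i j))
  exact ⟨m, hm, fun i f ↦ DFunLike.congr_fun (hfixed i) f⟩

end Means

section Amenable

/-- Left amenability of a discrete semigroup: there is a mean on its bounded functions that is
invariant under the left translations. The discrete topology makes every bounded function a bounded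
continuous function. An empty `S` has no mean, hence is not left amenable. -/
def IsLeftAmenable (S : Type*) [Add S] : Prop :=
  letI : TopologicalSpace S := ⊥
  ∃ m ∈ means S, ∀ (z : S) (f : S →ᵇ ℝ), m (f.compContinuous ⟨(z + ·), continuous_bot⟩) = m f

theorem isLeftAmenable_of_addCommSemigroup (S : Type*) [AddCommSemigroup S] [Nonempty S] :
    IsLeftAmenable S :=
  letI : TopologicalSpace S := ⊥
  exists_mem_means_forall_map_compContinuous_eq
    (g := fun z ↦ ⟨(z + ·), continuous_bot⟩) fun y z ↦ add_left_comm y z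

end Amenable

section Cocycle

/-- The failure of `F` to satisfy the cocycle equation, that is, minus its coboundary. -/
def cocycleDefect {S G : Type*} [Add S] [AddGroup G] (F : S → S → G) (x y z : S) : G :=
  F x y + F (x + y) z - F x (y + z) - F y z

lemma cocycleDefect_cocycle {S G : Type*} [AddSemigroup S] [AddCommGroup G] (F : S → S → G)
    (x y z w : S) :
    cocycleDefect F y z w + cocycleDefect F x (y + z) w + cocycleDefect F x y z =
      cocycleDefect F (x + y) z w + cocycleDefect F x y (z + w) := by
  simp only [cocycleDefect, add_assoc]
  abel

theorem cocycle_equation_stability_general {S : Type*} [AddSemigroup S] (hS : IsLeftAmenable S)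
    (ε : ℝ) (F : S → S → ℝ)
    (hF : ∀ x y z : S, |F x y + F (x + y) z - F x (y + z) - F y z| ≤ ε) :
    ∃ Ψ : S → S → ℝ,
      (∀ x y z : S, Ψ x y + Ψ (x + y) z = Ψ x (y + z) + Ψ y z) ∧
      (∀ x y : S, |F x y - Ψ x y| ≤ ε) := by
  let : TopologicalSpace S := ⊥
  have : DiscreteTopology S := ⟨rfl⟩
  obtain ⟨m, hm, hinv⟩ := hS
  let C (x y : S) : S →ᵇ ℝ := .ofNormedAddCommGroupDiscrete (cocycleDefect F x y) ε (hF x y)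
  have hC (x y : S) : ‖C x y‖ ≤ ε :=
    BoundedContinuousFunction.norm_ofNormedAddCommGroup_le _ ((abs_nonneg _).trans (hF x y x)) _
  refine ⟨fun x y ↦ F x y - m (C x y), fun x y z ↦ ?_, fun x y ↦ ?_⟩
  · have hcocycle : C y z + C x (y + z) + .const S (cocycleDefect F x y z) =
        C (x + y) z + (C x y).compContinuous ⟨(z + ·), continuous_bot⟩ := by
      ext w
      exact cocycleDefect_cocycle F x y z w
    have hmean : m (C y z) + m (C x (y + z)) + cocycleDefect F x y z =
        m (C (x + y) z) + m (C x y) := by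
      simpa only [map_add, map_const_of_mem_means hm, hinv] using congr_arg m hcocycle
    rw [cocycleDefect] at hmean
    linarith
  · rw [sub_sub_cancel]
    exact (hm.1 _).trans (hC x y)

end Cocycle

/-- Székelyhidi's stability theorem for the cocycle equation, specialized to
commutative semigroups (which are amenable) and real-valued functions:
an approximate cocycle is uniformly close (with the same bound) to an exact
solution of the cocycle equation. -/
theorem cocycle_equation_stability
    {S : Type*} [AddCommSemigroup S] (ε : ℝ) (hε : 0 ≤ ε)
    (F : S → S → ℝ)
    (hF : ∀ x y z : S, |F x y + F (x + y) z - F x (y + z) - F y z| ≤ ε) :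
    ∃ Ψ : S → S → ℝ,
      (∀ x y z : S, Ψ x y + Ψ (x + y) z = Ψ x (y + z) + Ψ y z) ∧
      (∀ x y : S, |F x y - Ψ x y| ≤ ε) := by
  cases isEmpty_or_nonempty S
  · exact ⟨F, isEmptyElim, isEmptyElim⟩
  · exact cocycle_equation_stability_general (isLeftAmenable_of_addCommSemigroup S) ε F hF
end

section
/- Let G : ℝ₊₊ × ℝ₊₊ → ℝ satisfy the cocycle equation G(x,y) + G(x+y,z) = G(x,y+z) + G(y,z) for all x,y,z > 0. Then there exist a function f : ℝ₊₊ → ℝ and a function B : ℝ₊₊ × ℝ₊₊ → ℝ satisfying B(x+y,z) = B(x,z) + B(y,z) and B(x,y) + B(y,x) = 0 for all x,y,z > 0, such that G(x,y) = B(x,y) + f(x+y) − f(x) − f(y) for all x,y > 0. -/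
/-!
The antisymmetrization `G x y - G y x` of a cocycle on a commutative semigroup is additive in its
first variable, so half of it serves as `B`. The symmetrization `G x y + G y x` is again a cocycle,
and it remains to see that a symmetric cocycle `σ` with values in a divisible group `A` is a
coboundary. Adjoining a zero, we may assume that the domain is a monoid `M`. Then `σ` twists the
addition of `M × A` into that of a commutative monoid `E`, an extension of `M` by `A`. Translating
an element of `E` by distinct elements of `A` gives distinct results, so `A` embeds into the
Grothendieck group of `E`. Divisible groups being injective, the identity of `A` extends along this
embedding to an additive `r : E → A`, and `σ` is the coboundary of `x ↦ -r (x, 0)`.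
-/

/-- The cocycle equation for a function of two variables on an additive semigroup. -/
def IsAddCocycle {S A : Type*} [Add S] [Add A] (G : S → S → A) : Prop :=
  ∀ x y z, G x y + G (x + y) z = G x (y + z) + G y z

namespace IsAddCocycle

variable {S A : Type*} [AddCommSemigroup S]

theorem add_flip [AddCommSemigroup A] {G : S → S → A} (hG : IsAddCocycle G) :
    IsAddCocycle fun x y ↦ G x y + G y x := by
  intro x y z
  have hxyz := hG x y z
  have hzyx := hG z y x
  rw [add_comm z y, add_comm y x] at hzyx
  calc
    (G x y + G y x) + (G (x + y) z + G z (x + y))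
        = (G x y + G (x + y) z) + (G z (x + y) + G y x) := by ac_rfl
    _ = (G x (y + z) + G y z) + (G z y + G (y + z) x) := by rw [hxyz, hzyx]
    _ = (G x (y + z) + G (y + z) x) + (G y z + G z y) := by ac_rfl

theorem sub_flip_add_left [AddCommGroup A] {G : S → S → A} (hG : IsAddCocycle G) (x y z : S) :
    G (x + y) z - G z (x + y) = (G x z - G z x) + (G y z - G z y) := by
  have hxyz := hG x y z
  have hzxy := hG z x y
  have hxzy := hG x z y
  rw [add_comm z x] at hzxy
  rw [add_comm z y] at hxzy
  grind

end IsAddCocycle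

/-- A symmetric two-cocycle on `S` with values in `A`. It is bundled so that its `Extension` can
carry the algebraic structure it determines. -/
structure SymmAddCocycle (S A : Type*) [Add S] [Add A] where
  toFun : S → S → A
  isAddCocycle : IsAddCocycle toFun
  symm : ∀ x y, toFun x y = toFun y x

namespace SymmAddCocycle

instance {S A : Type*} [Add S] [Add A] :
    CoeFun (SymmAddCocycle S A) fun _ ↦ S → S → A :=
  ⟨toFun⟩

section Monoid

variable {M A : Type*} [AddCommMonoid M] [AddCommGroup A]

/-- The extension of `M` by `A` determined by the cocycle `σ`: the set `M × A` with the addition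
`(x, a) + (y, b) = (x + y, a + b + σ x y)`. -/
structure Extension (σ : SymmAddCocycle M A) where
  base : M
  fiber : A

variable (σ : SymmAddCocycle M A)

theorem apply_zero_right (x : M) : σ x 0 = σ 0 0 := by
  simpa using σ.isAddCocycle x 0 0

namespace Extension

variable {σ}

instance : Add σ.Extension :=
  ⟨fun p q ↦ ⟨p.base + q.base, p.fiber + q.fiber + σ p.base q.base⟩⟩

-- `σ` need not be normalized, so the neutral element is `(0, -σ 0 0)` rather than `(0, 0)`.
instance : Zero σ.Extension :=
  ⟨⟨0, -σ 0 0⟩⟩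

theorem mk_add_mk (x y : M) (a b : A) :
    (⟨x, a⟩ + ⟨y, b⟩ : σ.Extension) = ⟨x + y, a + b + σ x y⟩ :=
  rfl

theorem zero_def : (0 : σ.Extension) = ⟨0, -σ 0 0⟩ :=
  rfl

instance : AddCommSemigroup σ.Extension where
  add_assoc := by
    rintro ⟨x, a⟩ ⟨y, b⟩ ⟨z, c⟩
    have hσ := σ.isAddCocycle x y z
    simp only [mk_add_mk, Extension.mk.injEq, add_assoc, true_and]
    grind
  add_comm := by
    rintro ⟨x, a⟩ ⟨y, b⟩
    rw [mk_add_mk, mk_add_mk, add_comm x, add_comm a, σ.symm]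

instance : AddCommMonoid σ.Extension where
  add_comm := add_comm
  zero_add := by
    rintro ⟨x, a⟩
    rw [zero_def, mk_add_mk, zero_add, σ.symm 0 x, σ.apply_zero_right x, neg_add_cancel_comm]
  add_zero := by
    rintro ⟨x, a⟩
    rw [zero_def, mk_add_mk, add_zero, σ.apply_zero_right x, neg_add_cancel_right]
  nsmul := nsmulRec

variable (σ) in
/-- The inclusion of the kernel `A` of the projection of the extension onto `M`. -/
def inl : A →+ σ.Extension where
  toFun a := ⟨0, a - σ 0 0⟩
  map_zero' := by rw [zero_sub, zero_def]
  map_add' a b := by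
    rw [mk_add_mk, add_zero, Extension.mk.injEq]
    exact ⟨rfl, by abel⟩

theorem inl_apply (a : A) : inl σ a = ⟨0, a - σ 0 0⟩ :=
  rfl

theorem mk_add_inl (x : M) (a b : A) : ⟨x, a⟩ + inl σ b = ⟨x, a + b⟩ := by
  rw [inl_apply, mk_add_mk, add_zero, σ.apply_zero_right x, ← add_sub_assoc, sub_add_cancel]

theorem add_inl_injective (p : σ.Extension) : Function.Injective fun a ↦ p + inl σ a := by
  obtain ⟨x, c⟩ := p
  intro a b hab
  simpa [mk_add_inl] using hab

theorem of_comp_inl_injective :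
    Function.Injective (Algebra.GrothendieckAddGroup.of.comp (inl σ)) := by
  intro a b hab
  obtain ⟨c, hc⟩ := (AddLocalization.addMonoidOf ⊤).eq_iff_exists.1 hab
  exact add_inl_injective c.1 hc

variable (σ) in
theorem exists_retraction_inl [DivisibleBy A ℤ] :
    ∃ r : σ.Extension →+ A, ∀ a, r (inl σ a) = a := by
  obtain ⟨φ, hφ⟩ := (Module.Baer.of_divisible A).extension_property_addMonoidHom _
    (of_comp_inl_injective (σ := σ)) (AddMonoidHom.id A)
  exact ⟨φ.comp Algebra.GrothendieckAddGroup.of, DFunLike.congr_fun hφ⟩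

end Extension

theorem exists_eq_coboundary_of_monoid [DivisibleBy A ℤ] :
    ∃ f : M → A, ∀ x y, σ x y = f (x + y) - f x - f y := by
  obtain ⟨r, hr⟩ := Extension.exists_retraction_inl σ
  refine ⟨fun x ↦ -r ⟨x, 0⟩, fun x y ↦ ?_⟩
  have hsum : r ⟨x, 0⟩ + r ⟨y, 0⟩ = r ⟨x + y, 0⟩ + σ x y :=
    calc
      r ⟨x, 0⟩ + r ⟨y, 0⟩ = r ⟨x + y, σ x y⟩ := by
        rw [← map_add, Extension.mk_add_mk, add_zero, zero_add]
      _ = r (⟨x + y, 0⟩ + Extension.inl σ (σ x y)) := by rw [Extension.mk_add_inl, zero_add]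
      _ = r ⟨x + y, 0⟩ + σ x y := by rw [map_add, hr]
  grind

end Monoid

section Semigroup

variable {S A : Type*} [AddCommSemigroup S] [AddCommGroup A] (σ : SymmAddCocycle S A)

/-- The extension by zero of a symmetric cocycle on a semigroup to the monoid obtained by adjoining
a neutral element. -/
def withZero : SymmAddCocycle (WithZero S) A where
  toFun := WithZero.recZeroCoe 0 fun x ↦ WithZero.recZeroCoe 0 (σ x)
  isAddCocycle x y z := by
    cases x <;> cases y <;> cases z <;> simp [← WithZero.coe_add, σ.isAddCocycle _ _ _]
  symm x y := by
    cases x <;> cases y <;> simp [σ.symm]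

theorem exists_eq_coboundary [DivisibleBy A ℤ] :
    ∃ f : S → A, ∀ x y, σ x y = f (x + y) - f x - f y := by
  obtain ⟨f, hf⟩ := exists_eq_coboundary_of_monoid σ.withZero
  exact ⟨fun x ↦ f x, fun x y ↦ hf x y⟩

end Semigroup

end SymmAddCocycle

/-- Divisibility of a rational vector space, with scalar multiplication by `n⁻¹` as the choice of
division by `n`. -/
abbrev divisibleByIntOfModuleRat (A : Type*) [AddCommGroup A] [Module ℚ A] : DivisibleBy A ℤ where
  div a n := (n : ℚ)⁻¹ • a
  div_zero a := by rw [Int.cast_zero, inv_zero, zero_smul]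
  div_cancel {n} a hn := by
    rw [← Int.cast_smul_eq_zsmul ℚ n, smul_inv_smul₀ (Int.cast_ne_zero.2 hn)]

theorem hosszu_cocycle_solution_general {S A : Type*} [AddCommSemigroup S] [AddCommGroup A]
    [Module ℚ A] {G : S → S → A} (hG : IsAddCocycle G) :
    ∃ f : S → A, ∃ B : S → S → A,
      (∀ x y z, B (x + y) z = B x z + B y z) ∧
      (∀ x y, B x y + B y x = 0) ∧
      ∀ x y, G x y = B x y + f (x + y) - f x - f y := by
  let σ : SymmAddCocycle S A := ⟨fun x y ↦ G x y + G y x, hG.add_flip, fun x y ↦ add_comm _ _⟩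
  let := divisibleByIntOfModuleRat A
  obtain ⟨f, hf⟩ := σ.exists_eq_coboundary
  refine ⟨fun x ↦ (2⁻¹ : ℚ) • f x, fun x y ↦ (2⁻¹ : ℚ) • (G x y - G y x),
    fun x y z ↦ ?_, fun x y ↦ ?_, fun x y ↦ ?_⟩
  · beta_reduce
    rw [hG.sub_flip_add_left, smul_add]
  · rw [← smul_add, sub_add_sub_cancel, sub_self, smul_zero]
  · have hxy : G x y + G y x = f (x + y) - f x - f y := hf x y
    calc
      G x y = (2⁻¹ : ℚ) • ((G x y - G y x) + (G x y + G y x)) := by module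
      _ = _ := by rw [hxy]; module

/-- Hosszú's theorem on the general solution of the cocycle equation,
specialized to the cancellative commutative semigroup `ℝ₊₊`:
every solution `G` of the cocycle equation has the form
`G(x,y) = B(x,y) + f(x+y) − f(x) − f(y)` where `B` is additive in the first
variable and antisymmetric. -/
theorem hosszu_cocycle_solution
    (G : ℝ → ℝ → ℝ)
    (hG : ∀ x y z : ℝ, 0 < x → 0 < y → 0 < z →
      G x y + G (x + y) z = G x (y + z) + G y z) :
    ∃ f : ℝ → ℝ, ∃ B : ℝ → ℝ → ℝ,
      (∀ x y z : ℝ, 0 < x → 0 < y → 0 < z → B (x + y) z = B x z + B y z) ∧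
      (∀ x y : ℝ, 0 < x → 0 < y → B x y + B y x = 0) ∧
      (∀ x y : ℝ, 0 < x → 0 < y → G x y = B x y + f (x + y) - f x - f y) := by
  have hG' : IsAddCocycle fun x y : {x : ℝ // 0 < x} ↦ G x y :=
    fun x y z ↦ hG x y z x.2 y.2 z.2
  obtain ⟨f, B, hadd, hanti, hGB⟩ := hosszu_cocycle_solution_general hG'
  let r : ℝ → {x : ℝ // 0 < x} := Function.invFun Subtype.val
  have r_coe : ∀ x : {x : ℝ // 0 < x}, r x = x :=
    Function.leftInverse_invFun Subtype.val_injective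
  refine ⟨fun x ↦ f (r x), fun x y ↦ B (r x) (r y), fun x y z hx hy _ ↦ ?_,
    fun x y _ _ ↦ hanti _ _, fun x y hx hy ↦ ?_⟩
  · lift x to {x : ℝ // 0 < x} using hx
    lift y to {x : ℝ // 0 < x} using hy
    simp only [← Positive.coe_add, r_coe, hadd]
  · lift x to {x : ℝ // 0 < x} using hx
    lift y to {x : ℝ // 0 < x} using hy
    simp only [← Positive.coe_add, r_coe, hGB]
end

section
/- Let α ∈ ℝ with α ≠ 0, let ε₃ ≥ 0, and let H : D → ℝ satisfy |H(tx,ty,0) − t^α·H(x,y,0)| ≤ ε₃ for all t,x,y > 0. Then the map (x,y) ↦ H(x,y,0) is exactly positively homogeneous of degree α on ℝ₊₊², i.e. H(sx,sy,0) = s^α·H(x,y,0) for all s,x,y > 0. -/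
/-!
Superstability of equivariance: let `χ` be a multiplicative character and suppose that
`f (t • x)` stays within `ε` of `χ t • f x`. Comparing `f (t • s • x)` with `χ t • f (s • x)` and
with `χ (t * s) • f x` bounds `χ t • (f (s • x) - χ s • f x)` by `2 * ε` for every `t`. If `χ` is
unbounded, the defect `f (s • x) - χ s • f x` must vanish. The power `t ↦ t ^ α` is such a
character of the positive reals exactly when `α ≠ 0`.
-/

theorem eq_zero_of_norm_smul_le_of_unbounded {R E ι : Type*} [Norm R]
    [NormedAddCommGroup E] [SMul R E] [NormSMulClass R E] {c : ι → R}
    (hc : ∀ B : ℝ, ∃ i, B < ‖c i‖) {v : E} {C : ℝ} (hv : ∀ i, ‖c i • v‖ ≤ C) : v = 0 := by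
  by_contra hne
  have hpos : 0 < ‖v‖ := norm_pos_iff.mpr hne
  obtain ⟨i, hi⟩ := hc (C / ‖v‖)
  have hlt : C < ‖c i • v‖ := by rwa [norm_smul, ← div_lt_iff₀ hpos]
  exact hlt.not_ge (hv i)

section ApproxEquivariant

variable {M X R E : Type*} [Semigroup M] [SemigroupAction M X] [Monoid R]

theorem norm_smul_equivariance_defect_le [SeminormedAddCommGroup E]
    [DistribMulAction R E] {χ : M →ₙ* R} {f : X → E} {ε : ℝ}
    (hf : ∀ t x, ‖f (t • x) - χ t • f x‖ ≤ ε)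
    (t s : M) (x : X) : ‖χ t • (f (s • x) - χ s • f x)‖ ≤ 2 * ε := by
  have hsplit : χ t • (f (s • x) - χ s • f x) =
      (f ((t * s) • x) - χ (t * s) • f x) - (f (t • s • x) - χ t • f (s • x)) := by
    rw [map_mul, mul_smul, mul_smul, smul_sub]
    abel
  calc ‖χ t • (f (s • x) - χ s • f x)‖
      ≤ ‖f ((t * s) • x) - χ (t * s) • f x‖ + ‖f (t • s • x) - χ t • f (s • x)‖ :=
        hsplit ▸ norm_sub_le _ _
    _ ≤ ε + ε := add_le_add (hf _ _) (hf _ _)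
    _ = 2 * ε := (two_mul ε).symm

theorem equivariant_of_approx_equivariant_of_unbounded [Norm R] [NormedAddCommGroup E]
    [DistribMulAction R E] [NormSMulClass R E] {χ : M →ₙ* R} {f : X → E} {ε : ℝ}
    (hχ : ∀ B : ℝ, ∃ t, B < ‖χ t‖)
    (hf : ∀ t x, ‖f (t • x) - χ t • f x‖ ≤ ε) (s : M) (x : X) : f (s • x) = χ s • f x :=
  sub_eq_zero.mp <| eq_zero_of_norm_smul_le_of_unbounded hχ fun t =>
    norm_smul_equivariance_defect_le hf t s x

end ApproxEquivariant

/-- The power character `t ↦ t ^ α` of the multiplicative group of positive reals, bundled as a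
multiplicative map so that homogeneity of degree `α` becomes equivariance. -/
noncomputable def posRpow (α : ℝ) : {t : ℝ // 0 < t} →ₙ* ℝ where
  toFun t := (t : ℝ) ^ α
  map_mul' s t := Real.mul_rpow s.2.le t.2.le

theorem exists_lt_norm_posRpow {α : ℝ} (hα : α ≠ 0) (B : ℝ) : ∃ t, B < ‖posRpow α t‖ := by
  have hpos : 0 < |B| + 1 := by positivity
  refine ⟨⟨(|B| + 1) ^ α⁻¹, Real.rpow_pos_of_pos hpos _⟩, ?_⟩
  calc B < |B| + 1 := (le_abs_self B).trans_lt (lt_add_one _)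
    _ = ((|B| + 1) ^ α⁻¹) ^ α := (Real.rpow_inv_rpow hpos.le hα).symm
    _ ≤ ‖((|B| + 1) ^ α⁻¹) ^ α‖ := Real.le_norm_self _

theorem approx_homogeneous_implies_homogeneous_general {X E : Type*}
    [SemigroupAction {t : ℝ // 0 < t} X] [NormedAddCommGroup E] [NormedSpace ℝ E]
    {α : ℝ} (hα : α ≠ 0) {ε : ℝ} {f : X → E}
    (hf : ∀ (t : {t : ℝ // 0 < t}) (x : X), ‖f (t • x) - (t : ℝ) ^ α • f x‖ ≤ ε)
    (s : {t : ℝ // 0 < t}) (x : X) : f (s • x) = (s : ℝ) ^ α • f x :=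
  equivariant_of_approx_equivariant_of_unbounded (χ := posRpow α) (exists_lt_norm_posRpow hα) hf s x

/-- Approximate positive homogeneity of nonzero degree α implies exact
positive homogeneity of degree α for the map `(x,y) ↦ H(x,y,0)`. -/
theorem approx_homogeneous_implies_homogeneous
    (α : ℝ) (hα : α ≠ 0) (ε₃ : ℝ) (hε₃ : 0 ≤ ε₃)
    (H : ℝ → ℝ → ℝ → ℝ)
    (hhom : ∀ t x y : ℝ, 0 < t → 0 < x → 0 < y →
      |H (t * x) (t * y) 0 - t ^ α * H x y 0| ≤ ε₃) :
    ∀ s x y : ℝ, 0 < s → 0 < x → 0 < y →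
      H (s * x) (s * y) 0 = s ^ α * H x y 0 := fun s x y hs hx hy =>
  approx_homogeneous_implies_homogeneous_general (X := {t : ℝ // 0 < t} × {t : ℝ // 0 < t}) hα
    (f := fun p => H p.1 p.2 0) (fun t p => hhom t p.1 p.2 t.2 p.1.2 p.2.2)
    ⟨s, hs⟩ (⟨x, hx⟩, ⟨y, hy⟩)
end

section
/- Let α ∈ ℝ with α ∉ {0,1}, and let F : ℝ₊₊ × ℝ₊₊ → ℝ be symmetric (F(x,y) = F(y,x) for all x,y > 0), positively homogeneous of degree α (F(tx,ty) = t^α·F(x,y) for all t,x,y > 0), and satisfy the cocycle equation F(x,y) + F(x+y,z) = F(x,y+z) + F(y,z) for all x,y,z > 0. Then there exists a constant c ∈ ℝ such that F(x,y) = c·[(x+y)^α − x^α − y^α] for all x,y > 0. -/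
/-!
A symmetric cocycle behaves like a coboundary `g (x + y) - g x - g y` under rebracketing: summing
`a`, `b`, `c`, `d` as `(a + b) + (c + d)` or as `(a + c) + (b + d)` costs the same. With
`a = b = x` and `c = d = y` this relates `F (2x) (2y)` and `F x y` to the diagonal values of `F`.
Homogeneity expresses the diagonal through `F 1 1` and turns `F (2x) (2y)` into `2 ^ α • F x y`,
so one can solve for `F x y` as soon as `2 ^ α ≠ 2`.
-/

/-- A symmetric 2-cocycle on the additive semigroup `S`, with trivial action on the values.
`F` is a total function on the ambient type whose values outside `S` are unconstrained. -/
structure IsSymmCocycleOn {M A : Type*} [Add M] [Add A]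
    (F : M → M → A) (S : AddSubsemigroup M) : Prop where
  symm : ∀ x ∈ S, ∀ y ∈ S, F x y = F y x
  cocycle : ∀ x ∈ S, ∀ y ∈ S, ∀ z ∈ S, F x y + F (x + y) z = F x (y + z) + F y z

/-- Homogeneity on `S` with an arbitrary scaling factor `φ`; degree `α` on the positive reals is
`φ t = t ^ α`. -/
def IsHomogeneousOn {K R E : Type*} [Mul K] [SMul R E]
    (F : K → K → E) (φ : K → R) (S : Set K) : Prop :=
  ∀ t ∈ S, ∀ x ∈ S, ∀ y ∈ S, F (t * x) (t * y) = φ t • F x y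

namespace IsSymmCocycleOn

section Semigroup

variable {M A : Type*} [AddCommSemigroup M] [AddCommSemigroup A]
  {F : M → M → A} {S : AddSubsemigroup M} {a b c d : M}

theorem add_right_comm (hF : IsSymmCocycleOn F S) (ha : a ∈ S) (hb : b ∈ S) (hc : c ∈ S) :
    F a b + F (a + b) c = F a c + F (a + c) b := by
  rw [hF.cocycle a ha b hb c hc, hF.cocycle a ha c hc b hb, hF.symm b hb c hc, add_comm b c]

theorem add_add_add_comm (hF : IsSymmCocycleOn F S)
    (ha : a ∈ S) (hb : b ∈ S) (hc : c ∈ S) (hd : d ∈ S) :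
    F a b + F c d + F (a + b) (c + d) = F a c + F b d + F (a + c) (b + d) :=
  calc
    F a b + F c d + F (a + b) (c + d) = F a b + F (a + b) c + F (a + b + c) d := by
      rw [add_assoc, add_comm (F c d), ← hF.cocycle _ (add_mem ha hb) c hc d hd, ← add_assoc]
    _ = F a c + F (a + c) b + F (a + c + b) d := by
      rw [hF.add_right_comm ha hb hc, _root_.add_right_comm a b c]
    _ = F a c + F b d + F (a + c) (b + d) := by
      rw [add_assoc, hF.cocycle _ (add_mem ha hc) b hb d hd, add_comm _ (F b d), add_assoc]

end Semigroup

theorem sub_two_smul_eq_of_isHomogeneousOn {K R E : Type*} [NonAssocSemiring K] [Ring R]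
    [AddCommGroup E] [Module R E] {F : K → K → E} {φ : K → R} {S : AddSubsemigroup K} {x y : K}
    (hF : IsSymmCocycleOn F S) (hhom : IsHomogeneousOn F φ S) (hone : 1 ∈ S)
    (hx : x ∈ S) (hy : y ∈ S) :
    (φ 2 - 2) • F x y = (φ (x + y) - φ x - φ y) • F 1 1 := by
  have diagonal {u : K} (hu : u ∈ S) : F u u = φ u • F 1 1 := by
    simpa only [mul_one] using hhom u hu 1 hone 1 hone
  have two_mem : (2 : K) ∈ S := one_add_one_eq_two (R := K) ▸ add_mem hone hone
  have doubling : F x x + F y y + F (x + x) (y + y) = F x y + F x y + F (x + y) (x + y) :=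
    hF.add_add_add_comm hx hx hy hy
  rw [diagonal hx, diagonal hy, diagonal (add_mem hx hy), ← two_mul x, ← two_mul y,
    hhom 2 two_mem x hx y hy, ← two_smul R (F x y)] at doubling
  rw [sub_smul, sub_smul, sub_smul, sub_sub, sub_eq_sub_iff_add_eq_add, add_comm, doubling,
    add_comm]

end IsSymmCocycleOn

/-- The strictly positive elements, as an additive semigroup; `positiveCone ℝ` is `ℝ₊₊`. -/
def positiveCone (M : Type*) [AddMonoid M] [Preorder M] [AddLeftStrictMono M] :
    AddSubsemigroup M where
  carrier := Set.Ioi 0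
  add_mem' hx hy := Set.mem_Ioi.2 (add_pos (Set.mem_Ioi.1 hx) (Set.mem_Ioi.1 hy))

theorem mem_positiveCone {M : Type*} [AddMonoid M] [Preorder M] [AddLeftStrictMono M] {x : M} :
    x ∈ positiveCone M ↔ 0 < x :=
  Iff.rfl

theorem two_rpow_ne_two {α : ℝ} (hα : α ≠ 1) : (2 : ℝ) ^ α ≠ 2 := fun h =>
  hα <| (Real.rpow_right_inj two_pos (by norm_num)).1 (h.trans (Real.rpow_one 2).symm)

theorem maksa_cocycle_solution_general {E : Type*} [AddCommGroup E] [Module ℝ E]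
    (α : ℝ) (hα1 : α ≠ 1)
    (F : ℝ → ℝ → E)
    (hsym : ∀ x y : ℝ, 0 < x → 0 < y → F x y = F y x)
    (hhom : ∀ t x y : ℝ, 0 < t → 0 < x → 0 < y →
      F (t * x) (t * y) = t ^ α • F x y)
    (hcoc : ∀ x y z : ℝ, 0 < x → 0 < y → 0 < z →
      F x y + F (x + y) z = F x (y + z) + F y z) :
    ∃ c : E, ∀ x y : ℝ, 0 < x → 0 < y →
      F x y = ((x + y) ^ α - x ^ α - y ^ α) • c := by
  have hF : IsSymmCocycleOn F (positiveCone ℝ) :=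
    ⟨fun x hx y hy => hsym x y hx hy, fun x hx y hy z hz => hcoc x y z hx hy hz⟩
  have hF_hom : IsHomogeneousOn F (· ^ α) (positiveCone ℝ : Set ℝ) :=
    fun t ht x hx y hy => hhom t x y ht hx hy
  have hne : (2 : ℝ) ^ α - 2 ≠ 0 := sub_ne_zero.2 (two_rpow_ne_two hα1)
  refine ⟨((2 : ℝ) ^ α - 2)⁻¹ • F 1 1, fun x y hx hy => ?_⟩
  rw [smul_comm, eq_inv_smul_iff₀ hne]
  exact hF.sub_two_smul_eq_of_isHomogeneousOn hF_hom (mem_positiveCone.2 one_pos) hx hy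

/-- Maksa: every symmetric, positively α-homogeneous (α ∉ {0,1}) solution of
the cocycle equation on `ℝ₊₊` has the form `F(x,y) = c·[(x+y)^α − x^α − y^α]`. -/
theorem maksa_cocycle_solution
    (α : ℝ) (hα0 : α ≠ 0) (hα1 : α ≠ 1)
    (F : ℝ → ℝ → ℝ)
    (hsym : ∀ x y : ℝ, 0 < x → 0 < y → F x y = F y x)
    (hhom : ∀ t x y : ℝ, 0 < t → 0 < x → 0 < y →
      F (t * x) (t * y) = t ^ α * F x y)
    (hcoc : ∀ x y z : ℝ, 0 < x → 0 < y → 0 < z →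
      F x y + F (x + y) z = F x (y + z) + F y z) :
    ∃ c : ℝ, ∀ x y : ℝ, 0 < x → 0 < y →
      F x y = c * ((x + y) ^ α - x ^ α - y ^ α) := by
  simpa only [smul_eq_mul, mul_comm] using
    maksa_cocycle_solution_general α hα1 F hsym hhom hcoc
end
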